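/- arXiv:0906.2450 — 3 statements merged into one kernel-verified Lean document; each statement's English description precedes it below -/
import Mathlib

section
/- For every nonnegative integer n, there exist integers x, y, z, each relatively prime to 6, such that 24n + 8 = x² + 3y² + 4z². -/
/-!
An even `n` prime to `3` is of the form `x ^ 2 + y ^ 2 + 3 * z ^ 2`. Indeed, by Dirichlet one can
choose a prime `p` with `p + 3 = n * D` and `D % 12 = 7`; quadratic reciprocity then makes `-D` a
square modulo `p`, which is what is needed to complete `p` and `n` to a positive definite ternary
form `a x² + p y² + n z² + z x + t x y` of half-discriminant `3`. Reduction theory shows that, up to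
equivalence, `x² + y² + y z + z²` is the only such form, and every value of `y² + y z + z²` is of
the form `u² + 3 v²`.

A descent by factors of `4` makes `x` odd. Apply this to `6 n + 2`, multiply by `4`, and rewrite
`4 (y² + 3 z²) = (y ± 3 z)² + 3 (y ∓ z)²`; congruences modulo `3` and a suitable sign of `z` make
all three terms prime to `6`.
-/

lemma jacobiSym_neg_eq {D p : ℕ} (hD : D % 4 = 3) (hp : Odd p) :
    jacobiSym (-D) p = jacobiSym p D := by
  rw [jacobiSym.neg _ hp]
  rcases Nat.odd_mod_four_iff.mp (Nat.odd_iff.mp hp) with h | h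
  · rw [ZMod.χ₄_nat_one_mod_four h, one_mul,
      jacobiSym.quadratic_reciprocity_one_mod_four h (Nat.odd_iff.mpr (by omega))]
  · rw [ZMod.χ₄_nat_three_mod_four h, jacobiSym.quadratic_reciprocity_three_mod_four hD h,
      neg_one_mul, neg_neg]

lemma isSquare_neg_of_dvd_add_three {p D : ℕ} [Fact p.Prime] (hp : Odd p) (hD : D % 12 = 7)
    (hdvd : D ∣ p + 3) : IsSquare (-D : ZMod p) := by
  have hp_mod : (p : ℤ) % D = (-3 : ℤ) % D := by
    obtain ⟨k, hk⟩ := hdvd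
    rw [show (p : ℤ) = -3 + D * k by linarith [(by exact_mod_cast hk : (p + 3 : ℤ) = D * k)],
      Int.add_mul_emod_self_left]
  have hJ : jacobiSym (-D) p = 1 := by
    calc jacobiSym (-D) p = jacobiSym p D := jacobiSym_neg_eq (by omega) hp
      _ = jacobiSym (-(3 : ℕ)) D := jacobiSym.mod_left' hp_mod
      _ = jacobiSym D 3 := jacobiSym_neg_eq rfl (Nat.odd_iff.mpr (by omega))
      _ = jacobiSym 1 3 := jacobiSym.mod_left' (by omega)
      _ = 1 := jacobiSym.one_left 3
  simpa using ZMod.isSquare_of_jacobiSym_eq_one hJ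

lemma exists_four_mul_mul_eq_sq_add {p : ℕ} (hp : Odd p) {D : ℤ} (hD : D % 4 = 3)
    (hsq : IsSquare (-D : ZMod p)) : ∃ a t : ℤ, 4 * a * p = t ^ 2 + D := by
  obtain ⟨y, hy⟩ := hsq
  obtain ⟨t₀, rfl⟩ := ZMod.intCast_surjective y
  have hdvd₀ : (p : ℤ) ∣ t₀ ^ 2 + D := by
    rw [← ZMod.intCast_zmod_eq_zero_iff_dvd]
    push_cast
    linear_combination -hy
  obtain ⟨t, hdvd, ht⟩ : ∃ t : ℤ, (p : ℤ) ∣ t ^ 2 + D ∧ Odd t := by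
    rcases Int.even_or_odd t₀ with ht₀ | ht₀
    · refine ⟨t₀ + p, ?_, ht₀.add_odd (by exact_mod_cast hp)⟩
      rw [show (t₀ + p) ^ 2 + D = t₀ ^ 2 + D + p * (2 * t₀ + p) by ring]
      exact hdvd₀.add (dvd_mul_right _ _)
    · exact ⟨t₀, hdvd₀, ht₀⟩
  have hfour : (4 : ℤ) ∣ t ^ 2 + D := by
    have := Int.sq_mod_four_eq_one_of_odd ht
    omega
  have hcop : IsCoprime (4 : ℤ) p := by
    simpa using (Nat.Coprime.pow_left 2 (Nat.coprime_two_left.mpr hp)).isCoprime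
  obtain ⟨a, ha⟩ := hcop.mul_dvd hfour hdvd
  exact ⟨a, t, by linarith⟩

lemma coprime_seven_mul_sub_three {n : ℕ} (hn2 : Even n) (hn3 : ¬3 ∣ n) :
    (7 * n - 3).Coprime (12 * n) := by
  refine Nat.coprime_of_dvd fun q hq hleft hright ↦ hn3 ?_
  have hdvd_three_of_dvd (hqn : q ∣ n) : q ∣ 3 := by
    have := Nat.dvd_sub (hqn.mul_left 7) hleft
    rwa [Nat.sub_sub_self (by omega)] at this
  have hq3 : q ∣ 3 := by
    rw [show 12 * n = 2 ^ 2 * (3 * n) by ring, hq.dvd_mul, hq.dvd_mul] at hright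
    rcases hright with h2 | h3 | hqn
    · exact hdvd_three_of_dvd ((hq.dvd_of_dvd_pow h2).trans hn2.two_dvd)
    · exact h3
    · exact hdvd_three_of_dvd hqn
  obtain rfl : q = 3 := (Nat.prime_dvd_prime_iff_eq hq Nat.prime_three).mp hq3
  omega

lemma exists_prime_add_three_eq_mul {n : ℕ} (hn2 : Even n) (hn3 : ¬3 ∣ n) :
    ∃ p D : ℕ, p.Prime ∧ D % 12 = 7 ∧ p + 3 = n * D := by
  obtain ⟨p, hlt, hp, hmod⟩ :=
    Nat.forall_exists_prime_gt_and_modEq (7 * n) (by omega) (coprime_seven_mul_sub_three hn2 hn3)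
  obtain ⟨k, hk⟩ := (Nat.modEq_iff_dvd' (by omega)).mp hmod.symm
  refine ⟨p, 7 + 12 * k, hp, by omega, ?_⟩
  rw [mul_add, show n * (12 * k) = 12 * n * k by ring]
  omega

lemma exists_sq_add_three_mul_sq_eq (u v : ℤ) {e : ℤ} (he : |e| = 1) :
    ∃ y z : ℤ, u ^ 2 + e * u * v + v ^ 2 = y ^ 2 + 3 * z ^ 2 := by
  have he2 : e ^ 2 = 1 := by rw [← sq_abs, he, one_pow]
  rcases Int.even_or_odd' u with ⟨i, rfl | rfl⟩
  · exact ⟨v + e * i, i, by linear_combination (-i ^ 2) * he2⟩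
  rcases Int.even_or_odd' v with ⟨j, rfl | rfl⟩
  · exact ⟨2 * i + 1 + e * j, j, by linear_combination (-j ^ 2) * he2⟩
  rcases abs_eq (by norm_num) |>.mp he with rfl | rfl
  · exact ⟨i - j, i + j + 1, by ring⟩
  · exact ⟨i + j + 1, i - j, by ring⟩

lemma exists_even_sq_add_three_mul_sq_eq {x z : ℤ} (hx : Odd x) (hz : Odd z) :
    ∃ x' z' : ℤ, Even z' ∧ x ^ 2 + 3 * z ^ 2 = x' ^ 2 + 3 * z' ^ 2 := by
  obtain ⟨i, rfl⟩ := hx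
  obtain ⟨j, rfl⟩ := hz
  rcases Int.even_or_odd (i - j) with h | h
  · exact ⟨i + 3 * j + 2, i - j, h, by ring⟩
  · exact ⟨i - 3 * j - 1, i + j + 1, by grind, by ring⟩

lemma exists_odd_four_mul_sq_add_sq_add_three_mul_sq_eq {x y z : ℤ}
    (h : ¬(Even x ∧ Even y ∧ Even z)) :
    ∃ x' y' z' : ℤ, Odd x' ∧
      4 * (x ^ 2 + y ^ 2 + 3 * z ^ 2) = x' ^ 2 + y' ^ 2 + 3 * z' ^ 2 := by
  have key (x y z : ℤ) (hxz : Odd (x + z)) : ∃ x' y' z' : ℤ, Odd x' ∧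
      4 * (x ^ 2 + y ^ 2 + 3 * z ^ 2) = x' ^ 2 + y' ^ 2 + 3 * z' ^ 2 :=
    ⟨x + 3 * z, 2 * y, x - z, by grind, by ring⟩
  by_cases hxz : Odd (x + z)
  · exact key x y z hxz
  by_cases hyz : Odd (y + z)
  · simpa only [add_comm (x ^ 2)] using key y x z hyz
  obtain ⟨x', z', hz', heq⟩ : ∃ x' z' : ℤ, Even z' ∧
      x ^ 2 + 3 * z ^ 2 = x' ^ 2 + 3 * z' ^ 2 :=
    exists_even_sq_add_three_mul_sq_eq (by grind) (by grind)
  have hyz' : Odd (y + z') := Odd.add_even (by grind) hz'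
  obtain ⟨x'', y'', z'', hodd, h4⟩ := key y x' z' hyz'
  exact ⟨x'', y'', z'', hodd, by linear_combination h4 + 4 * heq⟩

lemma even_sq_add_sq_add_three_mul_sq_iff {x y z : ℤ} :
    Even (x ^ 2 + y ^ 2 + 3 * z ^ 2) ↔ Even (x + y + z) := by
  have h3 : ¬Even (3 : ℤ) := by decide
  simp only [Int.even_add, Int.even_mul, Int.even_pow' two_ne_zero, h3, false_or]

lemma exists_odd_of_even_eq_sq_add_sq_add_three_mul_sq {n : ℕ} (hn : n ≠ 0) (heven : Even n)
    {x y z : ℤ} (h : (n : ℤ) = x ^ 2 + y ^ 2 + 3 * z ^ 2) :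
    ∃ x y z : ℤ, Odd x ∧ (n : ℤ) = x ^ 2 + y ^ 2 + 3 * z ^ 2 := by
  induction n using Nat.strong_induction_on generalizing x y z with
  | _ n ih =>
  rcases Int.even_or_odd x with hx | hx
  swap
  · exact ⟨x, y, z, hx, h⟩
  rcases Int.even_or_odd y with hy | hy
  swap
  · exact ⟨y, x, z, hy, by rw [h]; ring⟩
  have hz : Even z := by
    have := even_sq_add_sq_add_three_mul_sq_iff.mp (h ▸ (Int.even_coe_nat n).mpr heven)
    exact (Int.even_add.mp this).mp (hx.add hy)
  obtain ⟨i, rfl⟩ := hx.two_dvd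
  obtain ⟨j, rfl⟩ := hy.two_dvd
  obtain ⟨k, rfl⟩ := hz.two_dvd
  obtain ⟨m, rfl⟩ : 4 ∣ n := by
    rw [← Int.natCast_dvd_natCast, h]
    exact ⟨i ^ 2 + j ^ 2 + 3 * k ^ 2, by push_cast; ring⟩
  have hm : (m : ℤ) = i ^ 2 + j ^ 2 + 3 * k ^ 2 := by
    push_cast at h
    linarith
  obtain ⟨u, v, w, hparity, huvw⟩ : ∃ u v w : ℤ, ¬(Even u ∧ Even v ∧ Even w) ∧
      (m : ℤ) = u ^ 2 + v ^ 2 + 3 * w ^ 2 := by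
    rcases Nat.even_or_odd m with hm_even | hm_odd
    · obtain ⟨u, v, w, hu, huvw⟩ := ih m (by omega) (by omega) hm_even hm
      exact ⟨u, v, w, fun h ↦ Int.not_even_iff_odd.mpr hu h.1, huvw⟩
    · refine ⟨i, j, k, fun ⟨hi, hj, hk⟩ ↦ ?_, hm⟩
      have := even_sq_add_sq_add_three_mul_sq_iff.mpr ((hi.add hj).add hk)
      rw [← hm, Int.even_coe_nat] at this
      exact Nat.not_even_iff_odd.mpr hm_odd this
  obtain ⟨x, y, z, hx, hxyz⟩ := exists_odd_four_mul_sq_add_sq_add_three_mul_sq_eq hparity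
  exact ⟨x, y, z, hx, by push_cast; rw [huvw, hxyz]⟩

lemma gcd_six_eq_one_of_odd {x : ℤ} (h2 : Odd x) (h3 : ¬3 ∣ x) : Int.gcd x 6 = 1 := by
  have h3' : IsCoprime x 3 := (Int.prime_three.coprime_iff_not_dvd.mpr h3).symm
  exact Int.isCoprime_iff_gcd_eq_one.mp ((Int.isCoprime_two_right.mpr h2).mul_right h3')

lemma not_three_dvd_of_sq_add_sq_emod_three {x y : ℤ} (h : (x ^ 2 + y ^ 2) % 3 = 2) :
    ¬3 ∣ x ∧ ¬3 ∣ y := by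
  have hsq (w : ℤ) : w ^ 2 % 3 = if 3 ∣ w then 0 else 1 := by
    rcases (by omega : w % 3 = 0 ∨ w % 3 = 1 ∨ w % 3 = 2) with hw | hw | hw <;>
      simp [pow_two, Int.mul_emod, Int.dvd_iff_emod_eq_zero, hw]
  have hx := hsq x
  have hy := hsq y
  split_ifs at hx hy <;> omega

open Matrix

/-- The integral ternary quadratic form `a x² + b y² + c z² + r y z + s z x + t x y`. -/
structure TernaryForm where
  a : ℤ
  b : ℤ
  c : ℤ
  r : ℤ
  s : ℤ
  t : ℤ

namespace TernaryForm

variable {f g h : TernaryForm}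

/-- The value of the form at the point `v = (x, y, z)`. -/
def eval (f : TernaryForm) (v : Fin 3 → ℤ) : ℤ :=
  f.a * v 0 ^ 2 + f.b * v 1 ^ 2 + f.c * v 2 ^ 2 +
    f.r * v 1 * v 2 + f.s * v 2 * v 0 + f.t * v 0 * v 1

/-- The Gram matrix of `2 f`; the factor `2` keeps the entries integral. -/
def gram (f : TernaryForm) : Matrix (Fin 3) (Fin 3) ℤ :=
  !![2 * f.a, f.t, f.s; f.t, 2 * f.b, f.r; f.s, f.r, 2 * f.c]

/-- Half of the determinant of `gram`, which is always even. -/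
def halfDisc (f : TernaryForm) : ℤ :=
  4 * f.a * f.b * f.c + f.r * f.s * f.t - f.a * f.r ^ 2 - f.b * f.s ^ 2 - f.c * f.t ^ 2

lemma dotProduct_gram_mulVec (f : TernaryForm) (v : Fin 3 → ℤ) :
    v ⬝ᵥ f.gram *ᵥ v = 2 * f.eval v := by
  simp only [dotProduct, mulVec, gram, eval, Fin.sum_univ_three, of_apply, cons_val]
  ring

lemma det_gram (f : TernaryForm) : f.gram.det = 2 * f.halfDisc := by
  simp only [gram, halfDisc, det_fin_three, of_apply, cons_val]
  ring

lemma isHermitian_gram (f : TernaryForm) : f.gram.IsHermitian := by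
  ext i j
  fin_cases i <;> fin_cases j <;> rfl

lemma posDef_gram_iff : f.gram.PosDef ↔ ∀ v ≠ 0, 0 < f.eval v := by
  simp only [posDef_iff_dotProduct_mulVec, f.isHermitian_gram, true_and, star_trivial,
    dotProduct_gram_mulVec, Nat.ofNat_pos, mul_pos_iff_of_pos_left, ne_eq]

/-- The coefficient of `y²` in the projected binary form `4 a f - (2 a x + t y + s z)²`. -/
def minorXY (f : TernaryForm) : ℤ := 4 * f.a * f.b - f.t ^ 2

/-- The coefficient of `z²` in the projected binary form `4 a f - (2 a x + t y + s z)²`. -/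
def minorXZ (f : TernaryForm) : ℤ := 4 * f.a * f.c - f.s ^ 2

/-- Half of the coefficient of `y z` in the projected binary form
`4 a f - (2 a x + t y + s z)²`. -/
def mixedMinor (f : TernaryForm) : ℤ := 2 * f.a * f.r - f.s * f.t

lemma minorXY_mul_minorXZ (f : TernaryForm) :
    f.minorXY * f.minorXZ = f.mixedMinor ^ 2 + 4 * f.a * f.halfDisc := by
  simp only [minorXY, minorXZ, mixedMinor, halfDisc]
  ring

lemma four_mul_a_mul_minorXY_mul_eval (f : TernaryForm) (v : Fin 3 → ℤ) :
    4 * f.a * f.minorXY * f.eval v =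
      f.minorXY * (2 * f.a * v 0 + f.t * v 1 + f.s * v 2) ^ 2 +
        (f.minorXY * v 1 + f.mixedMinor * v 2) ^ 2 + 4 * f.a * f.halfDisc * v 2 ^ 2 := by
  simp only [minorXY, mixedMinor, halfDisc, eval]
  ring

lemma posDef_gram_of_pos (ha : 0 < f.a) (hm : 0 < f.minorXY) (hd : 0 < f.halfDisc) :
    f.gram.PosDef := by
  refine posDef_gram_iff.mpr fun v hv ↦ ?_
  by_contra! hle
  have hsum := f.four_mul_a_mul_minorXY_mul_eval v
  have hsum_nonpos : 4 * f.a * f.minorXY * f.eval v ≤ 0 :=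
    mul_nonpos_of_nonneg_of_nonpos (by positivity) hle
  have hX : 0 ≤ f.minorXY * (2 * f.a * v 0 + f.t * v 1 + f.s * v 2) ^ 2 := by positivity
  have hY : 0 ≤ (f.minorXY * v 1 + f.mixedMinor * v 2) ^ 2 := by positivity
  have hZ : 0 ≤ 4 * f.a * f.halfDisc * v 2 ^ 2 := by positivity
  have h2 : v 2 = 0 := by
    simpa [ha.ne', hd.ne'] using (by linarith : 4 * f.a * f.halfDisc * v 2 ^ 2 = 0)
  have h1 : v 1 = 0 := by
    simpa [h2, hm.ne'] using (by linarith : (f.minorXY * v 1 + f.mixedMinor * v 2) ^ 2 = 0)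
  have h0 : v 0 = 0 := by
    simpa [h1, h2, hm.ne', ha.ne'] using
      (by linarith : f.minorXY * (2 * f.a * v 0 + f.t * v 1 + f.s * v 2) ^ 2 = 0)
  exact hv (funext fun i ↦ by fin_cases i <;> assumption)

lemma a_pos (hf : f.gram.PosDef) : 0 < f.a := by
  simpa [eval] using posDef_gram_iff.mp hf ![1, 0, 0] (by simp)

lemma minorXY_pos (hf : f.gram.PosDef) : 0 < f.minorXY := by
  have ha := a_pos hf
  have hv := posDef_gram_iff.mp hf ![-f.t, 2 * f.a, 0] (by simp [ha.ne'])
  have heval : f.eval ![-f.t, 2 * f.a, 0] = f.a * f.minorXY := by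
    simp only [eval, minorXY, cons_val]
    ring
  exact pos_of_mul_pos_right (heval ▸ hv) ha.le

/-- Equivalence under an invertible integral change of variables. -/
def Equivalent (f g : TernaryForm) : Prop :=
  ∃ M : Matrix (Fin 3) (Fin 3) ℤ, IsUnit M ∧ g.gram = Mᵀ * f.gram * M

namespace Equivalent

lemma refl (f : TernaryForm) : f.Equivalent f := ⟨1, isUnit_one, by simp⟩

lemma trans (hfg : f.Equivalent g) (hgh : g.Equivalent h) : f.Equivalent h := by
  obtain ⟨M, hM, hfg⟩ := hfg
  obtain ⟨N, hN, hgh⟩ := hgh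
  exact ⟨M * N, hM.mul hN, by simp only [hgh, hfg, transpose_mul, Matrix.mul_assoc]⟩

lemma posDef_gram (hfg : f.Equivalent g) (hf : f.gram.PosDef) : g.gram.PosDef := by
  obtain ⟨M, hM, hfg⟩ := hfg
  rw [hfg, ← conjTranspose_eq_transpose_of_trivial]
  exact hf.conjTranspose_mul_mul_same (mulVec_injective_of_isUnit hM)

lemma halfDisc_eq (hfg : f.Equivalent g) : g.halfDisc = f.halfDisc := by
  obtain ⟨M, hM, hfg⟩ := hfg
  have hdet : M.det ^ 2 = 1 := Int.isUnit_sq ((isUnit_iff_isUnit_det M).mp hM)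
  have : 2 * g.halfDisc = 2 * f.halfDisc := by
    rw [← det_gram, ← det_gram, hfg, det_mul, det_mul, det_transpose]
    linear_combination f.gram.det * hdet
  linarith

lemma exists_eval_eq (hfg : f.Equivalent g) (v : Fin 3 → ℤ) : ∃ w, g.eval w = f.eval v := by
  obtain ⟨M, hM, hfg⟩ := hfg
  obtain ⟨w, rfl⟩ := mulVec_surjective_iff_isUnit.mpr hM v
  refine ⟨w, mul_left_cancel₀ (two_ne_zero' ℤ) ?_⟩
  rw [← dotProduct_gram_mulVec, ← dotProduct_gram_mulVec, hfg, ← mulVec_mulVec, ← mulVec_mulVec,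
    mulVec_transpose, dotProduct_comm, ← dotProduct_mulVec, dotProduct_comm]

end Equivalent

/-- The form obtained by exchanging `x` and `y`. -/
def swapXY (f : TernaryForm) : TernaryForm := ⟨f.b, f.a, f.c, f.s, f.r, f.t⟩

/-- The form obtained by exchanging `y` and `z`. -/
def swapYZ (f : TernaryForm) : TernaryForm := ⟨f.a, f.c, f.b, f.r, f.t, f.s⟩

/-- The form obtained by the substitution `x ↦ x + k y`. -/
def shearXY (f : TernaryForm) (k : ℤ) : TernaryForm :=
  ⟨f.a, f.b + f.t * k + f.a * k ^ 2, f.c, f.r + f.s * k, f.s, f.t + 2 * f.a * k⟩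

/-- The form obtained by the substitution `x ↦ x + k z`. -/
def shearXZ (f : TernaryForm) (k : ℤ) : TernaryForm :=
  ⟨f.a, f.b, f.c + f.s * k + f.a * k ^ 2, f.r + f.t * k, f.s + 2 * f.a * k, f.t⟩

/-- The form obtained by the substitution `y ↦ y + k z`. -/
def shearYZ (f : TernaryForm) (k : ℤ) : TernaryForm :=
  ⟨f.a, f.b, f.c + f.r * k + f.b * k ^ 2, f.r + 2 * f.b * k, f.s + f.t * k, f.t⟩

lemma equivalent_swapXY (f : TernaryForm) : f.Equivalent f.swapXY := by
  refine ⟨!![0, 1, 0; 1, 0, 0; 0, 0, 1], by simp [isUnit_iff_isUnit_det, det_fin_three], ?_⟩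
  ext i j
  fin_cases i <;> fin_cases j <;> simp [gram, swapXY, mul_apply, Fin.sum_univ_three]

lemma equivalent_swapYZ (f : TernaryForm) : f.Equivalent f.swapYZ := by
  refine ⟨!![1, 0, 0; 0, 0, 1; 0, 1, 0], by simp [isUnit_iff_isUnit_det, det_fin_three], ?_⟩
  ext i j
  fin_cases i <;> fin_cases j <;> simp [gram, swapYZ, mul_apply, Fin.sum_univ_three]

lemma equivalent_shearXY (f : TernaryForm) (k : ℤ) : f.Equivalent (f.shearXY k) := by
  refine ⟨!![1, k, 0; 0, 1, 0; 0, 0, 1], by simp [isUnit_iff_isUnit_det, det_fin_three], ?_⟩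
  ext i j
  fin_cases i <;> fin_cases j <;> simp [gram, shearXY, mul_apply, Fin.sum_univ_three] <;> ring

lemma equivalent_shearXZ (f : TernaryForm) (k : ℤ) : f.Equivalent (f.shearXZ k) := by
  refine ⟨!![1, 0, k; 0, 1, 0; 0, 0, 1], by simp [isUnit_iff_isUnit_det, det_fin_three], ?_⟩
  ext i j
  fin_cases i <;> fin_cases j <;> simp [gram, shearXZ, mul_apply, Fin.sum_univ_three] <;> ring

lemma equivalent_shearYZ (f : TernaryForm) (k : ℤ) : f.Equivalent (f.shearYZ k) := by
  refine ⟨!![1, 0, 0; 0, 1, k; 0, 0, 1], by simp [isUnit_iff_isUnit_det, det_fin_three], ?_⟩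
  ext i j
  fin_cases i <;> fin_cases j <;> simp [gram, shearYZ, mul_apply, Fin.sum_univ_three] <;> ring

/-- Reducedness in the style of Gauss and Hermite: the leading coefficient is at most the next one,
the projected binary form is Gauss-reduced, and the cross terms involving `x` are minimal under
translations of `x`. Every positive definite form is equivalent to a reduced one, and the
coefficients of a reduced form are bounded in terms of its half-discriminant. -/
structure IsReduced (f : TernaryForm) : Prop where
  a_pos : 0 < f.a
  abs_t_le : |f.t| ≤ f.a
  abs_s_le : |f.s| ≤ f.a
  two_mul_abs_mixedMinor_le : 2 * |f.mixedMinor| ≤ f.minorXY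
  a_le_b : f.a ≤ f.b
  minorXY_le_minorXZ : f.minorXY ≤ f.minorXZ

lemma exists_two_mul_abs_add_mul_le (t : ℤ) {m : ℤ} (hm : 0 < m) :
    ∃ k, 2 * |t + k * m| ≤ m := by
  obtain ⟨k, ⟨hle, hlt⟩, -⟩ := existsUnique_add_zsmul_mem_Ico (show 0 < 2 * m by omega) (2 * t) (-m)
  rw [smul_eq_mul, mul_left_comm] at hle hlt
  have : |2 * (t + k * m)| ≤ m := abs_le.mpr ⟨by linarith, by linarith⟩
  exact ⟨k, by rwa [abs_mul, abs_two] at this⟩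

lemma exists_equivalent_minimal (hf : f.gram.PosDef) :
    ∃ g, f.Equivalent g ∧ ∀ h, g.Equivalent h →
      g.a ≤ h.a ∧ (g.a = h.a → g.minorXY ≤ h.minorXY) := by
  let key (g : TernaryForm) : ℕ ×ₗ ℕ := toLex (g.a.toNat, g.minorXY.toNat)
  obtain ⟨g, hfg, hmin⟩ :=
    exists_minimalFor_of_wellFoundedLT f.Equivalent key ⟨f, .refl f⟩
  refine ⟨g, hfg, fun h hgh ↦ ?_⟩
  have hkey : key g ≤ key h := (le_total (key g) (key h)).elim id (hmin (hfg.trans hgh))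
  rw [Prod.Lex.toLex_le_toLex] at hkey
  have ha := a_pos ((hfg.trans hgh).posDef_gram hf)
  have hm := minorXY_pos ((hfg.trans hgh).posDef_gram hf)
  omega

lemma minorXY_shearXY (f : TernaryForm) (k : ℤ) : (f.shearXY k).minorXY = f.minorXY := by
  simp only [shearXY, minorXY]
  ring

lemma mixedMinor_shearYZ (f : TernaryForm) (k : ℤ) :
    (f.shearYZ k).mixedMinor = f.mixedMinor + k * f.minorXY := by
  simp only [shearYZ, mixedMinor, minorXY]
  ring

lemma mixedMinor_shearXZ (f : TernaryForm) (k : ℤ) :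
    (f.shearXZ k).mixedMinor = f.mixedMinor := by
  simp only [shearXZ, mixedMinor]
  ring

lemma exists_equivalent_sizeReduced (ha : 0 < f.a) (hpos : 0 < f.minorXY) :
    ∃ g, f.Equivalent g ∧ g.a = f.a ∧ g.minorXY = f.minorXY ∧
      |g.t| ≤ f.a ∧ |g.s| ≤ f.a ∧ 2 * |g.mixedMinor| ≤ f.minorXY := by
  have h2a : 0 < 2 * f.a := by positivity
  obtain ⟨k, hk⟩ := exists_two_mul_abs_add_mul_le f.t h2a
  obtain ⟨l, hl⟩ := exists_two_mul_abs_add_mul_le (f.shearXY k).mixedMinor hpos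
  obtain ⟨m, hm⟩ := exists_two_mul_abs_add_mul_le ((f.shearXY k).shearYZ l).s h2a
  have ht : |f.t + 2 * f.a * k| ≤ f.a := by
    rw [mul_comm (2 * f.a)]
    linarith
  have hs : |((f.shearXY k).shearYZ l).s + 2 * f.a * m| ≤ f.a := by
    rw [mul_comm (2 * f.a)]
    linarith
  refine ⟨((f.shearXY k).shearYZ l).shearXZ m, ?_, rfl, f.minorXY_shearXY k, ht, hs, ?_⟩
  · exact ((equivalent_shearXY _ k).trans (equivalent_shearYZ _ l)).trans (equivalent_shearXZ _ m)
  · rwa [mixedMinor_shearXZ, mixedMinor_shearYZ, minorXY_shearXY]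

theorem exists_equivalent_isReduced (hf : f.gram.PosDef) :
    ∃ g, f.Equivalent g ∧ g.IsReduced := by
  obtain ⟨f₀, hf₀, hmin⟩ := exists_equivalent_minimal hf
  have ha := a_pos (hf₀.posDef_gram hf)
  obtain ⟨g, hg, ha_eq, hm_eq, ht, hs, hq⟩ :=
    exists_equivalent_sizeReduced ha (minorXY_pos (hf₀.posDef_gram hf))
  refine ⟨g, hf₀.trans hg, ha_eq ▸ ha, ha_eq ▸ ht, ha_eq ▸ hs, hm_eq ▸ hq, ?_, ?_⟩
  · exact ha_eq ▸ (hmin _ (hg.trans g.equivalent_swapXY)).1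
  · exact hm_eq ▸ (hmin _ (hg.trans g.equivalent_swapYZ)).2 ha_eq.symm

lemma IsReduced.three_mul_a_sq_le (hf : f.IsReduced) : 3 * f.a ^ 2 ≤ f.minorXY := by
  have ht : f.t ^ 2 ≤ f.a ^ 2 := sq_le_sq' (abs_le.mp hf.abs_t_le).1 (abs_le.mp hf.abs_t_le).2
  have hab : f.a * f.a ≤ f.a * f.b := mul_le_mul_of_nonneg_left hf.a_le_b hf.a_pos.le
  unfold minorXY
  linarith

lemma IsReduced.three_mul_minorXY_sq_le (hf : f.IsReduced) :
    3 * f.minorXY ^ 2 ≤ 16 * f.a * f.halfDisc := by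
  have hm : 0 ≤ f.minorXY := (by positivity : 0 ≤ 3 * f.a ^ 2).trans hf.three_mul_a_sq_le
  have hq : (2 * |f.mixedMinor|) ^ 2 ≤ f.minorXY ^ 2 :=
    pow_le_pow_left₀ (by positivity) hf.two_mul_abs_mixedMinor_le 2
  rw [mul_pow, sq_abs] at hq
  have hprod := f.minorXY_mul_minorXZ
  have := mul_le_mul_of_nonneg_left hf.minorXY_le_minorXZ hm
  linarith

theorem IsReduced.twentySeven_mul_a_cube_le (hf : f.IsReduced) :
    27 * f.a ^ 3 ≤ 16 * f.halfDisc := by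
  have ha := hf.a_pos
  refine le_of_mul_le_mul_left ?_ ha
  calc f.a * (27 * f.a ^ 3) = 3 * (3 * f.a ^ 2) ^ 2 := by ring
    _ ≤ 3 * f.minorXY ^ 2 := by gcongr; exact hf.three_mul_a_sq_le
    _ ≤ 16 * f.a * f.halfDisc := hf.three_mul_minorXY_sq_le
    _ = f.a * (16 * f.halfDisc) := by ring

lemma IsReduced.a_eq_one (hf : f.IsReduced) (hd : f.halfDisc ≤ 13) : f.a = 1 := by
  have hcube := hf.twentySeven_mul_a_cube_le
  have hlt : f.a < 2 := lt_of_pow_lt_pow_left₀ 3 (by norm_num) (by linarith)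
  linarith [hf.a_pos]

lemma IsReduced.coeff_eq_of_halfDisc_eq_three (hf : f.IsReduced) (hd : f.halfDisc = 3) :
    f.a = 1 ∧ f.b = 1 ∧ f.c = 1 ∧ f.s = 0 ∧ (|f.r| = 1 ∧ f.t = 0 ∨ f.r = 0 ∧ |f.t| = 1) := by
  have ha : f.a = 1 := hf.a_eq_one (by rw [hd]; norm_num)
  have hm_ge := hf.three_mul_a_sq_le
  have hm_le : f.minorXY ≤ 4 := by
    have := hf.three_mul_minorXY_sq_le
    rw [ha, hd] at this
    nlinarith
  have ht := abs_le.mp (ha ▸ hf.abs_t_le)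
  have hs := abs_le.mp (ha ▸ hf.abs_s_le)
  have hq := abs_le.mp (by linarith [hf.two_mul_abs_mixedMinor_le] : |f.mixedMinor| ≤ 2)
  have hle := hf.minorXY_le_minorXZ
  obtain ⟨a, b, c, r, s, t⟩ := f
  simp only [minorXY, minorXZ, mixedMinor, halfDisc] at *
  subst ha
  have hr : -1 ≤ r ∧ r ≤ 1 := by
    have hst : |s * t| ≤ 1 := by
      rw [abs_mul]
      exact mul_le_one₀ (abs_le.mpr hs) (abs_nonneg t) (abs_le.mpr ht)
    have := abs_le.mp hst
    omega
  obtain ⟨ht₁, ht₂⟩ := ht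
  obtain ⟨hs₁, hs₂⟩ := hs
  obtain ⟨hr₁, hr₂⟩ := hr
  interval_cases t <;> interval_cases s <;> interval_cases r <;> grind

theorem exists_eval_eq_of_halfDisc_eq_three (hf : f.gram.PosDef) (hd : f.halfDisc = 3)
    (v : Fin 3 → ℤ) : ∃ x y z : ℤ, f.eval v = x ^ 2 + y ^ 2 + 3 * z ^ 2 := by
  obtain ⟨g, hfg, hg⟩ := exists_equivalent_isReduced hf
  obtain ⟨w, hw⟩ := hfg.exists_eval_eq v
  obtain ⟨ha, hb, hc, hs, ⟨hr, ht⟩ | ⟨hr, ht⟩⟩ :=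
    hg.coeff_eq_of_halfDisc_eq_three (hfg.halfDisc_eq.trans hd)
  · obtain ⟨y, z, hyz⟩ := exists_sq_add_three_mul_sq_eq (w 1) (w 2) hr
    refine ⟨w 0, y, z, ?_⟩
    rw [← hw, eval, ha, hb, hc, hs, ht]
    linear_combination hyz
  · obtain ⟨y, z, hyz⟩ := exists_sq_add_three_mul_sq_eq (w 0) (w 1) ht
    refine ⟨w 2, y, z, ?_⟩
    rw [← hw, eval, ha, hb, hc, hr, hs]
    linear_combination hyz

end TernaryForm

lemma exists_ternaryForm_halfDisc_eq_three_eval_eq {n : ℕ} (hn2 : Even n) (hn3 : ¬3 ∣ n) :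
    ∃ f : TernaryForm, f.gram.PosDef ∧ f.halfDisc = 3 ∧ f.eval ![0, 0, 1] = n := by
  obtain ⟨p, D, hp, hD, hpD⟩ := exists_prime_add_three_eq_mul hn2 hn3
  have : Fact p.Prime := ⟨hp⟩
  have hp_odd : Odd p := by
    have : Even (p + 3) := hpD ▸ hn2.mul_right D
    grind
  obtain ⟨a, t, hat⟩ := exists_four_mul_mul_eq_sq_add hp_odd (D := D) (by omega)
    (by exact_mod_cast isSquare_neg_of_dvd_add_three hp_odd hD (Dvd.intro_left n hpD.symm))
  have hp_pos : (0 : ℤ) < p := by exact_mod_cast hp.pos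
  have hD_pos : (0 : ℤ) < D := by omega
  have ha : 0 < a := by
    by_contra! hle
    linarith [sq_nonneg t, mul_nonpos_of_nonpos_of_nonneg hle hp_pos.le]
  let f : TernaryForm := ⟨a, p, n, 0, 1, t⟩
  have hm : f.minorXY = D := by
    simp only [f, TernaryForm.minorXY]
    linarith
  have hd : f.halfDisc = 3 := by
    have hpD' : (p + 3 : ℤ) = n * D := by exact_mod_cast hpD
    simp only [f, TernaryForm.halfDisc]
    linear_combination n * hat - hpD'
  exact ⟨f, TernaryForm.posDef_gram_of_pos ha (by omega) (by omega), hd, by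
    simp [f, TernaryForm.eval]⟩

theorem exists_odd_eq_sq_add_sq_add_three_mul_sq {n : ℕ} (hn2 : Even n) (hn3 : ¬3 ∣ n) :
    ∃ x y z : ℤ, Odd x ∧ (n : ℤ) = x ^ 2 + y ^ 2 + 3 * z ^ 2 := by
  obtain ⟨f, hf, hd, hn⟩ := exists_ternaryForm_halfDisc_eq_three_eval_eq hn2 hn3
  obtain ⟨x, y, z, hxyz⟩ := TernaryForm.exists_eval_eq_of_halfDisc_eq_three hf hd ![0, 0, 1]
  exact exists_odd_of_even_eq_sq_add_sq_add_three_mul_sq (by grind) hn2 (hn ▸ hxyz)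

theorem rep_24n_add_eight (n : ℕ) :
    ∃ x y z : ℤ, Int.gcd x 6 = 1 ∧ Int.gcd y 6 = 1 ∧ Int.gcd z 6 = 1 ∧
      24 * (n : ℤ) + 8 = x ^ 2 + 3 * y ^ 2 + 4 * z ^ 2 := by
  obtain ⟨x, y, z, hx, h⟩ :=
    exists_odd_eq_sq_add_sq_add_three_mul_sq (n := 6 * n + 2) (by grind) (by omega)
  push_cast at h
  have hyz : Odd (y + z) := by
    have := even_sq_add_sq_add_three_mul_sq_iff.mp (h ▸ (by grind : Even (6 * (n : ℤ) + 2)))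
    grind
  obtain ⟨hx3, hy3⟩ : ¬3 ∣ x ∧ ¬3 ∣ y := not_three_dvd_of_sq_add_sq_emod_three (by omega)
  obtain ⟨w, hw, hwz, hw3⟩ : ∃ w, w ^ 2 = z ^ 2 ∧ Odd (y + w) ∧ ¬3 ∣ y - w := by
    by_cases h3 : 3 ∣ y - z
    · exact ⟨-z, neg_sq z, by grind, by omega⟩
    · exact ⟨z, rfl, hyz, h3⟩
  refine ⟨y + 3 * w, y - w, x, gcd_six_eq_one_of_odd (by grind) (by omega),
    gcd_six_eq_one_of_odd (by grind) hw3, gcd_six_eq_one_of_odd hx hx3, ?_⟩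
  linear_combination 4 * h - 12 * hw
end

section
/- For every nonnegative integer n, there exist integers x, y, z, each relatively prime to 6, such that 24n + 9 = x² + 2y² + 6z². -/
/-!
By the three-square theorem for numbers congruent to 3 modulo 8, write `8n + 3 = a² + b² + c²`;
here `a`, `b`, `c` are odd, they can be chosen not all divisible by 3, and signs can be chosen so
that all are 1 modulo 4. With `b = z + v` and `c = z - v`, so that `z` is odd and `v` is even,
`24n + 9 = 3 (a² + 2v² + 2z²) = (a + 2v)² + 2 (a - v)² + 6z²`, and a suitable choice of the sign
of `v` and of the order of `a`, `b`, `c` makes the three terms prime to 3.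

The three-square theorem is Dirichlet's argument: a positive definite integral ternary form of
determinant 1 is equivalent to `x² + y² + z²` (Gauss reduction), and `m` is a value of such a form
as soon as `-b` is a square modulo `b m - 1` for some `b > 0`. If `m ≡ 3` modulo 8, primes in
arithmetic progressions provide `b` with `b m - 1` twice a prime, and quadratic reciprocity for the
Jacobi symbol shows that `-b` is a square modulo this prime.
-/

open Matrix

/-- A Gram matrix of an integral ternary quadratic form is reduced in the sense of Gauss if the
binary form of its upper left `2 × 2` block and the adjoint binary form, read off from the lower
right block of the adjugate, are both reduced, and the remaining entry of the first row is small
too. Symmetry and positivity are not part of the definition. -/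
structure IsGaussReduced (S : Matrix (Fin 3) (Fin 3) ℤ) : Prop where
  two_mul_abs_zero_one_le : 2 * |S 0 1| ≤ S 0 0
  two_mul_abs_zero_two_le : 2 * |S 0 2| ≤ S 0 0
  zero_zero_le_one_one : S 0 0 ≤ S 1 1
  two_mul_abs_adjugate_one_two_le : 2 * |S.adjugate 1 2| ≤ S.adjugate 2 2
  adjugate_two_two_le_one_one : S.adjugate 2 2 ≤ S.adjugate 1 1

section TernaryForms

variable {S : Matrix (Fin 3) (Fin 3) ℤ}

lemma adjugate_one_one_mul_two_two_sub {R : Type*} [CommRing R] (S : Matrix (Fin 3) (Fin 3) R) :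
    S.adjugate 1 1 * S.adjugate 2 2 - S.adjugate 1 2 * S.adjugate 2 1 = S 0 0 * S.det := by
  simp only [adjugate_fin_three, det_fin_three, of_apply, cons_val', cons_val_zero,
    cons_val_fin_one, cons_val_one, cons_val]
  ring

lemma posDef_transpose_mul_mul_same {n R : Type*} [Fintype n] [DecidableEq n] [CommRing R]
    [PartialOrder R] [StarRing R] [TrivialStar R] {S V : Matrix n n R}
    (hS : S.PosDef) (hV : IsUnit V) : (Vᵀ * S * V).PosDef := by
  rw [← conjTranspose_eq_transpose_of_trivial]
  exact hS.conjTranspose_mul_mul_same (mulVec_injective_of_isUnit hV)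

lemma adjugate_two_two_pos (hS : S.PosDef) : 0 < S.adjugate 2 2 := by
  have hsymm : S 1 0 = S 0 1 := congr_fun₂ hS.isHermitian.eq 0 1
  set x : Fin 3 → ℤ := ![-S 0 1, S 0 0, 0] with hx
  have hx0 : x ≠ 0 := fun h => hS.diag_pos.ne' (congr_fun h 1)
  have hval : star x ⬝ᵥ S *ᵥ x = S 0 0 * S.adjugate 2 2 := by
    simp only [hx, hsymm, adjugate_fin_three, dotProduct, mulVec, Fin.sum_univ_three,
      Pi.star_apply, star_trivial, of_apply, cons_val', cons_val_zero, cons_val_fin_one,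
      cons_val_one, cons_val]
    ring
  exact pos_of_mul_pos_right (hval ▸ hS.dotProduct_mulVec_pos hx0) hS.diag_pos.le

lemma exists_two_mul_abs_add_mul_le {a : ℤ} (ha : 0 < a) (b : ℤ) :
    ∃ k : ℤ, 2 * |b + k * a| ≤ a := by
  refine ⟨-((2 * b + a) / (2 * a)), ?_⟩
  have hdiv := Int.emod_add_mul_ediv (2 * b + a) (2 * a)
  have hnonneg := Int.emod_nonneg (2 * b + a) (b := 2 * a) (by omega)
  have hlt := Int.emod_lt_of_pos (2 * b + a) (b := 2 * a) (by omega)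
  cases abs_cases (b + -((2 * b + a) / (2 * a)) * a) <;> linarith

lemma exists_shear_two_mul_abs_le (h₀ : 0 < S 0 0) (h₂ : 0 < S.adjugate 2 2) :
    ∃ V T : Matrix (Fin 3) (Fin 3) ℤ, IsUnit V ∧ T = Vᵀ * S * V ∧
      T 0 0 = S 0 0 ∧ T.adjugate 2 2 = S.adjugate 2 2 ∧
      2 * |T 0 1| ≤ T 0 0 ∧ 2 * |T 0 2| ≤ T 0 0 ∧ 2 * |T.adjugate 1 2| ≤ T.adjugate 2 2 := by
  obtain ⟨m, hm⟩ := exists_two_mul_abs_add_mul_le h₂ (S.adjugate 1 2)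
  obtain ⟨k, hk⟩ := exists_two_mul_abs_add_mul_le h₀ (S 0 1)
  obtain ⟨l, hl⟩ := exists_two_mul_abs_add_mul_le h₀ (S 0 2 - m * S 0 1)
  set V : Matrix (Fin 3) (Fin 3) ℤ := !![1, k, l; 0, 1, -m; 0, 0, 1] with hV
  have hT00 : (Vᵀ * S * V) 0 0 = S 0 0 := by
    simp [hV, mul_apply, Fin.sum_univ_three]
  have hT01 : (Vᵀ * S * V) 0 1 = S 0 1 + k * S 0 0 := by
    simp only [hV, mul_apply, transpose_apply, Fin.sum_univ_three, of_apply, cons_val',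
      cons_val_zero, cons_val_fin_one, cons_val_one, cons_val]
    ring
  have hT02 : (Vᵀ * S * V) 0 2 = S 0 2 - m * S 0 1 + l * S 0 0 := by
    simp only [hV, mul_apply, transpose_apply, Fin.sum_univ_three, of_apply, cons_val',
      cons_val_zero, cons_val_fin_one, cons_val_one, cons_val]
    ring
  have hadj12 : (Vᵀ * S * V).adjugate 1 2 = S.adjugate 1 2 + m * S.adjugate 2 2 := by
    simp only [hV, adjugate_fin_three, mul_apply, transpose_apply, Fin.sum_univ_three, of_apply,
      cons_val', cons_val_zero, cons_val_fin_one, cons_val_one, cons_val]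
    ring
  have hadj22 : (Vᵀ * S * V).adjugate 2 2 = S.adjugate 2 2 := by
    simp only [hV, adjugate_fin_three, mul_apply, transpose_apply, Fin.sum_univ_three, of_apply,
      cons_val', cons_val_zero, cons_val_fin_one, cons_val_one, cons_val]
    ring
  refine ⟨V, _, ?_, rfl, hT00, hadj22, ?_, ?_, ?_⟩
  · simp [isUnit_iff_isUnit_det, hV, det_fin_three]
  · rwa [hT00, hT01]
  · rwa [hT00, hT02]
  · rwa [hadj22, hadj12]

lemma exists_minimal_congr (hS : S.PosDef) :
    ∃ V : Matrix (Fin 3) (Fin 3) ℤ, IsUnit V ∧ ∀ W : Matrix (Fin 3) (Fin 3) ℤ, IsUnit W →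
      toLex ((Vᵀ * S * V) 0 0, (Vᵀ * S * V).adjugate 2 2) ≤
        toLex ((Wᵀ * S * W) 0 0, (Wᵀ * S * W).adjugate 2 2) := by
  let size (V : Matrix (Fin 3) (Fin 3) ℤ) : ℕ ×ₗ ℕ :=
    toLex (((Vᵀ * S * V) 0 0).toNat, ((Vᵀ * S * V).adjugate 2 2).toNat)
  obtain ⟨V, hV, hmin⟩ := exists_minimalFor_of_wellFoundedLT IsUnit size ⟨1, isUnit_one⟩
  refine ⟨V, hV, fun W hW => ?_⟩
  have hle : size V ≤ size W := (le_total _ _).elim id (hmin hW)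
  have hWpos := posDef_transpose_mul_mul_same hS hW
  have hVpos := posDef_transpose_mul_mul_same hS hV
  have := hWpos.diag_pos (i := 0)
  have := hVpos.diag_pos (i := 0)
  have := adjugate_two_two_pos hWpos
  have := adjugate_two_two_pos hVpos
  simp only [size, Prod.Lex.toLex_le_toLex] at hle ⊢
  omega

theorem exists_isGaussReduced (hS : S.PosDef) :
    ∃ V : Matrix (Fin 3) (Fin 3) ℤ, IsUnit V ∧ IsGaussReduced (Vᵀ * S * V) := by
  obtain ⟨V, hV, hmin⟩ := exists_minimal_congr hS
  have hpos := posDef_transpose_mul_mul_same hS hV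
  obtain ⟨W, T, hW, hT, h00, hadj22, h01, h02, hadj12⟩ :=
    exists_shear_two_mul_abs_le hpos.diag_pos (adjugate_two_two_pos hpos)
  have hVW : (V * W)ᵀ * S * (V * W) = T := by
    simp only [hT, transpose_mul, Matrix.mul_assoc]
  have hle (P : Matrix (Fin 3) (Fin 3) ℤ) (hP : IsUnit P) :
      T 0 0 < (Pᵀ * T * P) 0 0 ∨
        T 0 0 = (Pᵀ * T * P) 0 0 ∧ T.adjugate 2 2 ≤ (Pᵀ * T * P).adjugate 2 2 := by
    have hVWP : (V * W * P)ᵀ * S * (V * W * P) = Pᵀ * T * P := by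
      simp only [← hVW, transpose_mul, Matrix.mul_assoc]
    have h := hmin _ ((hV.mul hW).mul hP)
    rwa [hVWP, ← h00, ← hadj22, Prod.Lex.toLex_le_toLex] at h
  refine ⟨V * W, hV.mul hW, hVW ▸ ⟨h01, h02, ?_, hadj12, ?_⟩⟩
  · have h := (hle !![0, 1, 0; 1, 0, 0; 0, 0, 1]
      (by simp [isUnit_iff_isUnit_det, det_fin_three])).elim le_of_lt fun h => h.1.le
    simpa [mul_apply, Fin.sum_univ_three] using h
  · simpa [mul_apply, Fin.sum_univ_three, adjugate_fin_three, mul_comm] using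
      hle !![1, 0, 0; 0, 0, 1; 0, 1, 0] (by simp [isUnit_iff_isUnit_det, det_fin_three])

namespace IsGaussReduced

lemma three_mul_zero_zero_sq_le (hred : IsGaussReduced S) (hS : S.PosDef) :
    3 * S 0 0 ^ 2 ≤ 4 * S.adjugate 2 2 := by
  have hsymm : S 1 0 = S 0 1 := congr_fun₂ hS.isHermitian.eq 0 1
  have hadj : S.adjugate 2 2 = S 0 0 * S 1 1 - S 0 1 ^ 2 := by
    simp [adjugate_fin_three, hsymm, sq]
  have hoff : (2 * |S 0 1|) ^ 2 ≤ S 0 0 ^ 2 :=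
    pow_le_pow_left₀ (by positivity) hred.two_mul_abs_zero_one_le 2
  have hdiag : S 0 0 ^ 2 ≤ S 0 0 * S 1 1 := by
    rw [sq]
    exact mul_le_mul_of_nonneg_left hred.zero_zero_le_one_one hS.diag_pos.le
  rw [mul_pow, sq_abs] at hoff
  linarith

lemma three_mul_adjugate_two_two_sq_le (hred : IsGaussReduced S) (hS : S.PosDef) :
    3 * S.adjugate 2 2 ^ 2 ≤ 4 * (S 0 0 * S.det) := by
  have hsymm : S.adjugate 2 1 = S.adjugate 1 2 := congr_fun₂ hS.isHermitian.adjugate.eq 1 2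
  have hoff : (2 * |S.adjugate 1 2|) ^ 2 ≤ S.adjugate 2 2 ^ 2 :=
    pow_le_pow_left₀ (by positivity) hred.two_mul_abs_adjugate_one_two_le 2
  have hdiag : S.adjugate 2 2 ^ 2 ≤ S.adjugate 1 1 * S.adjugate 2 2 := by
    rw [sq]
    exact mul_le_mul_of_nonneg_right hred.adjugate_two_two_le_one_one
      (adjugate_two_two_pos hS).le
  rw [mul_pow, sq_abs] at hoff
  rw [← adjugate_one_one_mul_two_two_sub, hsymm]
  linarith

lemma zero_zero_pow_three_le (hred : IsGaussReduced S) (hS : S.PosDef) :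
    27 * S 0 0 ^ 3 ≤ 64 * S.det := by
  have hpos : 0 < S 0 0 := hS.diag_pos
  have hsq : (3 * S 0 0 ^ 2) ^ 2 ≤ (4 * S.adjugate 2 2) ^ 2 :=
    pow_le_pow_left₀ (by positivity) (hred.three_mul_zero_zero_sq_le hS) 2
  refine le_of_mul_le_mul_left ?_ hpos
  linarith [hred.three_mul_adjugate_two_two_sq_le hS]

lemma eq_one (hred : IsGaussReduced S) (hS : S.PosDef) (hdet : S.det = 1) : S = 1 := by
  have h00 : S 0 0 = 1 := by
    have hle := hred.zero_zero_pow_three_le hS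
    have hpos : 0 < S 0 0 := hS.diag_pos
    by_contra hne
    have h2 : 2 ≤ S 0 0 := by omega
    have : 2 ^ 3 ≤ S 0 0 ^ 3 := pow_le_pow_left₀ (by norm_num) h2 3
    omega
  have hadj22 : S.adjugate 2 2 = 1 := by
    have hle := hred.three_mul_adjugate_two_two_sq_le hS
    have hpos := adjugate_two_two_pos hS
    rw [h00, hdet] at hle
    nlinarith
  have h01 : S 0 1 = 0 := by
    have := hred.two_mul_abs_zero_one_le
    rw [← Int.abs_lt_one_iff]
    omega
  have h02 : S 0 2 = 0 := by
    have := hred.two_mul_abs_zero_two_le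
    rw [← Int.abs_lt_one_iff]
    omega
  have hadj12 : S.adjugate 1 2 = 0 := by
    have := hred.two_mul_abs_adjugate_one_two_le
    rw [← Int.abs_lt_one_iff]
    omega
  have h10 : S 1 0 = 0 := (congr_fun₂ hS.isHermitian.eq 0 1).trans h01
  have h20 : S 2 0 = 0 := (congr_fun₂ hS.isHermitian.eq 0 2).trans h02
  have h21 : S 2 1 = S 1 2 := congr_fun₂ hS.isHermitian.eq 1 2
  have h11 : S 1 1 = 1 := by simpa [adjugate_fin_three, h00, h01] using hadj22
  have h12 : S 1 2 = 0 := by simpa [adjugate_fin_three, h00, h02] using hadj12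
  have h22 : S 2 2 = 1 := by simpa [det_fin_three, h00, h01, h02, h10, h11, h12, h20] using hdet
  ext i j
  fin_cases i <;> fin_cases j <;> simp [h00, h01, h02, h10, h11, h12, h20, h21, h22]

end IsGaussReduced

theorem exists_eq_transpose_mul_self (hS : S.PosDef) (hdet : S.det = 1) :
    ∃ U : Matrix (Fin 3) (Fin 3) ℤ, S = Uᵀ * U := by
  obtain ⟨V, hV, hred⟩ := exists_isGaussReduced hS
  have hone : Vᵀ * S * V = 1 := by
    refine hred.eq_one (posDef_transpose_mul_mul_same hS hV) ?_
    rw [det_mul, det_mul, det_transpose, hdet, mul_one, ← sq]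
    exact Int.isUnit_sq ((isUnit_iff_isUnit_det V).1 hV)
  have hVdet := (isUnit_iff_isUnit_det V).1 hV
  refine ⟨V⁻¹, ?_⟩
  calc S = (V * V⁻¹)ᵀ * S * (V * V⁻¹) := by simp [mul_nonsing_inv V hVdet]
    _ = V⁻¹ᵀ * (Vᵀ * S * V) * V⁻¹ := by simp only [transpose_mul, Matrix.mul_assoc]
    _ = V⁻¹ᵀ * V⁻¹ := by rw [hone, Matrix.mul_one]

end TernaryForms

lemma exists_three_squares_of_dvd {m b g : ℤ} (hb : 0 < b) (hq : 1 < b * m)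
    (h : b * m - 1 ∣ g ^ 2 + b) : ∃ x y z : ℤ, m = x ^ 2 + y ^ 2 + z ^ 2 := by
  obtain ⟨a, ha⟩ := h
  have hm : 0 < m := pos_of_mul_pos_right (by omega) hb.le
  set q := b * m - 1 with hq_def
  have hq0 : 0 < q := by omega
  set S : Matrix (Fin 3) (Fin 3) ℤ := !![a, g, 1; g, q, 0; 1, 0, m] with hS
  have hdet : S.det = 1 := by
    simp only [hS, det_fin_three, of_apply, cons_val', cons_val_zero, cons_val_fin_one,
      cons_val_one, cons_val]
    linear_combination hq_def - m * ha
  have hpos : S.PosDef := by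
    refine .of_dotProduct_mulVec_pos (by ext i j; fin_cases i <;> fin_cases j <;> rfl)
      fun v hv => ?_
    have hsq : m * q * (star v ⬝ᵥ S *ᵥ v) =
        m * (q * v 1 + g * v 0) ^ 2 + q * (m * v 2 + v 0) ^ 2 + v 0 ^ 2 := by
      simp only [hS, dotProduct, mulVec, Fin.sum_univ_three, Pi.star_apply, star_trivial, of_apply,
        cons_val', cons_val_zero, cons_val_fin_one, cons_val_one, cons_val]
      linear_combination v 0 ^ 2 * (hq_def - m * ha)
    refine pos_of_mul_pos_right (hsq ▸ lt_of_le_of_ne (by positivity) fun h0 => hv ?_)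
      (mul_nonneg hm.le hq0.le)
    rw [eq_comm, add_eq_zero_iff_of_nonneg (by positivity) (by positivity),
      add_eq_zero_iff_of_nonneg (by positivity) (by positivity)] at h0
    obtain ⟨⟨h1, h2⟩, h0⟩ := h0
    have hv0 : v 0 = 0 := by simpa using h0
    have hv1 : v 1 = 0 := by simpa [hv0, hm.ne', hq0.ne'] using h1
    have hv2 : v 2 = 0 := by simpa [hv0, hm.ne', hq0.ne'] using h2
    ext i
    fin_cases i <;> assumption
  obtain ⟨U, hU⟩ := exists_eq_transpose_mul_self hpos hdet
  refine ⟨U 0 2, U 1 2, U 2 2, ?_⟩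
  simpa [hS, mul_apply, Fin.sum_univ_three, sq] using congr_fun₂ hU 2 2

lemma exists_two_mul_dvd_sq_add {p b t : ℤ} (hp : Odd p) (h : p ∣ t ^ 2 + b) :
    ∃ g : ℤ, 2 * p ∣ g ^ 2 + b := by
  refine ⟨t + p * (t + b), ?_⟩
  have hcop : IsCoprime 2 p := Int.isCoprime_two_left.2 hp
  refine hcop.mul_dvd (even_iff_two_dvd.1 ?_) ?_
  · have := Int.not_even_iff_odd.2 hp
    simp only [parity_simps]
    tauto
  · have hsplit : (t + p * (t + b)) ^ 2 + b =
        t ^ 2 + b + p * ((t + b) * (2 * t + p * (t + b))) := by ring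
    rw [hsplit]
    exact h.add (dvd_mul_right p _)

open scoped NumberTheorySymbols in
lemma jacobiSym_neg_eq_one {b m p : ℕ} (hb : b % 8 = 1) (hp : p % 4 = 1)
    (h : 2 * p + 1 = b * m) : J(-(b : ℤ) | p) = 1 := by
  have hbodd : Odd b := Nat.odd_iff.2 (by omega)
  have hpodd : Odd p := Nat.odd_iff.2 (by omega)
  have hneg_two : J(-2 | b) = 1 := by
    rw [jacobiSym.at_neg_two hbodd, ZMod.χ₈'_nat_eq_if_mod_eight, if_neg (by omega),
      if_pos (.inl hb)]
  have hmod : -2 * (p : ℤ) ≡ 1 [ZMOD b] :=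
    (Int.modEq_iff_dvd).2 ⟨m, by linarith [(by exact_mod_cast h : 2 * (p : ℤ) + 1 = b * m)]⟩
  calc J(-(b : ℤ) | p) = J(b | p) := by
        rw [jacobiSym.neg _ hpodd, ZMod.χ₄_nat_one_mod_four hp, one_mul]
    _ = J(p | b) := jacobiSym.quadratic_reciprocity_one_mod_four' hbodd hp
    _ = J(-2 * p | b) := by rw [jacobiSym.mul_left, hneg_two, one_mul]
    _ = 1 := by rw [jacobiSym.mod_left' hmod, jacobiSym.one_left]

lemma exists_prime_two_mul_add_one_eq_mul {m : ℕ} (hm : m % 8 = 3) :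
    ∃ b p : ℕ, b % 8 = 1 ∧ p.Prime ∧ p % 4 = 1 ∧ 2 * p + 1 = b * m := by
  obtain ⟨k, rfl, hk⟩ : ∃ k, m = 2 * k + 1 ∧ k % 4 = 1 := ⟨m / 2, by omega, by omega⟩
  have hcop : k.Coprime (4 * (2 * k + 1)) := by
    have hodd : k.Coprime 2 := Nat.coprime_two_right.2 (Nat.odd_iff.2 (by omega))
    exact (hodd.pow_right 2).mul_right (by simp)
  obtain ⟨p, hlt, hp, hmod⟩ := Nat.forall_exists_prime_gt_and_modEq k (by omega) hcop
  obtain ⟨j, hj⟩ := (Nat.modEq_iff_dvd' hlt.le).1 hmod.symm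
  have hp_eq : p = 4 * ((2 * k + 1) * j) + k := by rw [← mul_assoc]; omega
  exact ⟨8 * j + 1, p, by omega, hp, by omega, by rw [hp_eq]; ring⟩

theorem exists_three_squares_of_mod_eight_eq_three {m : ℕ} (hm : m % 8 = 3) :
    ∃ x y z : ℤ, (m : ℤ) = x ^ 2 + y ^ 2 + z ^ 2 := by
  obtain ⟨b, p, hb, hp, hp4, h⟩ := exists_prime_two_mul_add_one_eq_mul hm
  have : Fact p.Prime := ⟨hp⟩
  obtain ⟨s, hs⟩ := ZMod.isSquare_of_jacobiSym_eq_one (jacobiSym_neg_eq_one hb hp4 h)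
  obtain ⟨t, rfl⟩ := ZMod.intCast_surjective s
  have hdvd : (p : ℤ) ∣ t ^ 2 + b := by
    rw [← ZMod.intCast_zmod_eq_zero_iff_dvd]
    push_cast at hs ⊢
    rw [sq, ← hs, neg_add_cancel]
  have hpodd : Odd (p : ℤ) := Int.odd_iff.2 (by omega)
  obtain ⟨g, hg⟩ := exists_two_mul_dvd_sq_add hpodd hdvd
  have hz : 2 * (p : ℤ) + 1 = b * m := by exact_mod_cast h
  refine exists_three_squares_of_dvd (b := b) (g := g) (by omega) ?_ ?_
  · have := hp.pos
    omega
  · rwa [← hz, add_sub_cancel_right]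

lemma exists_three_squares_nine_mul_not_three_dvd {N x y z : ℤ}
    (h : N = x ^ 2 + y ^ 2 + z ^ 2) (hndvd : ¬(3 ∣ x ∧ 3 ∣ y ∧ 3 ∣ z)) :
    ∃ u v w : ℤ, 9 * N = u ^ 2 + v ^ 2 + w ^ 2 ∧ ¬(3 ∣ u ∧ 3 ∣ v ∧ 3 ∣ w) := by
  -- `3x - 2(x + y + z)` and its analogues are all prime to 3 unless `3 ∣ x + y + z`, and the signs
  -- of `x` and `y` are free.
  obtain ⟨x₁, y₁, hx, hy, hsum⟩ : ∃ x₁ y₁ : ℤ, x₁ ^ 2 = x ^ 2 ∧ y₁ ^ 2 = y ^ 2 ∧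
      ¬3 ∣ x₁ + y₁ + z := by
    by_contra! hall
    have := hall x y rfl rfl
    have := hall (-x) y (by ring) rfl
    have := hall x (-y) rfl (by ring)
    omega
  refine ⟨x₁ - 2 * (y₁ + z), y₁ - 2 * (x₁ + z), z - 2 * (x₁ + y₁), ?_, by omega⟩
  rw [h, ← hx, ← hy]
  ring

lemma exists_three_squares_not_three_dvd {N : ℕ} (hN : N ≠ 0)
    (h : ∃ x y z : ℤ, (N : ℤ) = x ^ 2 + y ^ 2 + z ^ 2) :
    ∃ x y z : ℤ, (N : ℤ) = x ^ 2 + y ^ 2 + z ^ 2 ∧ ¬(3 ∣ x ∧ 3 ∣ y ∧ 3 ∣ z) := by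
  induction N using Nat.strong_induction_on with
  | _ N ih =>
  obtain ⟨x, y, z, hxyz⟩ := h
  by_cases hdvd : 3 ∣ x ∧ 3 ∣ y ∧ 3 ∣ z
  · obtain ⟨⟨u, rfl⟩, ⟨v, rfl⟩, ⟨w, rfl⟩⟩ := hdvd
    obtain ⟨M, hM⟩ : ∃ M : ℕ, (M : ℤ) = u ^ 2 + v ^ 2 + w ^ 2 :=
      ⟨_, Int.toNat_of_nonneg (by positivity)⟩
    have hNM : (N : ℤ) = 9 * M := by rw [hxyz, hM]; ring
    obtain ⟨x, y, z, h, hndvd⟩ := ih M (by omega) (by omega) ⟨u, v, w, hM⟩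
    rw [hNM]
    exact exists_three_squares_nine_mul_not_three_dvd h hndvd
  · exact ⟨x, y, z, hxyz, hdvd⟩

lemma odd_of_sq_add_sq_add_sq_mod_four {x y z : ℤ} (h : (x ^ 2 + y ^ 2 + z ^ 2) % 4 = 3) :
    Odd x ∧ Odd y ∧ Odd z := by
  have hsq (t : ℤ) : Odd t ∧ t ^ 2 % 4 = 1 ∨ t ^ 2 % 4 = 0 := by
    rcases Int.even_or_odd t with ht | ht
    · exact .inr (Int.emod_eq_zero_of_dvd (pow_dvd_pow_of_dvd ht.two_dvd 2))
    · exact .inl ⟨ht, Int.sq_mod_four_eq_one_of_odd ht⟩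
  rcases hsq x with hx | hx <;> rcases hsq y with hy | hy <;> rcases hsq z with hz | hz <;>
    first | exact ⟨hx.1, hy.1, hz.1⟩ | omega

lemma exists_mod_four_eq_one_sq_eq {x : ℤ} (hx : Odd x) :
    ∃ a : ℤ, a % 4 = 1 ∧ a ^ 2 = x ^ 2 ∧ (3 ∣ a ↔ 3 ∣ x) := by
  obtain h | h : x % 4 = 1 ∨ x % 4 = 3 := by
    have := Int.odd_iff.1 hx
    omega
  · exact ⟨x, h, rfl, .rfl⟩
  · exact ⟨-x, by omega, neg_sq x, dvd_neg⟩

lemma exists_three_squares_mod_four_eq_one (n : ℕ) :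
    ∃ a b c : ℤ, 8 * (n : ℤ) + 3 = a ^ 2 + b ^ 2 + c ^ 2 ∧ a % 4 = 1 ∧ b % 4 = 1 ∧ c % 4 = 1 ∧
      ¬(3 ∣ a ∧ 3 ∣ b ∧ 3 ∣ c) := by
  obtain ⟨x, y, z, hxyz, hndvd⟩ := exists_three_squares_not_three_dvd (N := 8 * n + 3) (by omega)
    (exists_three_squares_of_mod_eight_eq_three (by omega))
  push_cast at hxyz
  obtain ⟨hx, hy, hz⟩ := odd_of_sq_add_sq_add_sq_mod_four (x := x) (y := y) (z := z) (by omega)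
  obtain ⟨a, ha4, ha, ha3⟩ := exists_mod_four_eq_one_sq_eq hx
  obtain ⟨b, hb4, hb, hb3⟩ := exists_mod_four_eq_one_sq_eq hy
  obtain ⟨c, hc4, hc, hc3⟩ := exists_mod_four_eq_one_sq_eq hz
  exact ⟨a, b, c, by rw [hxyz, ha, hb, hc], ha4, hb4, hc4, by rwa [ha3, hb3, hc3]⟩

lemma gcd_six_eq_one {x : ℤ} (h2 : ¬2 ∣ x) (h3 : ¬3 ∣ x) : Int.gcd x 6 = 1 := by
  have hcop2 : IsCoprime x 2 := ((Int.prime_two.coprime_iff_not_dvd).2 h2).symm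
  have hcop3 : IsCoprime x 3 := ((Int.prime_three.coprime_iff_not_dvd).2 h3).symm
  exact Int.isCoprime_iff_gcd_eq_one.1 (hcop2.mul_right hcop3)

lemma exists_three_mul_sum_sq_eq_of_not_three_dvd_add {a b c : ℤ} (ha : a % 4 = 1) (hb : b % 4 = 1)
    (hc : c % 4 = 1) (hadd : ¬3 ∣ b + c) (hsub : ¬(3 ∣ a ∧ 3 ∣ b - c)) :
    ∃ x y z : ℤ, Int.gcd x 6 = 1 ∧ Int.gcd y 6 = 1 ∧ Int.gcd z 6 = 1 ∧
      3 * (a ^ 2 + b ^ 2 + c ^ 2) = x ^ 2 + 2 * y ^ 2 + 6 * z ^ 2 := by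
  obtain ⟨z, v, rfl, rfl⟩ : ∃ z v : ℤ, b = z + v ∧ c = z - v :=
    ⟨(b + c) / 2, (b - c) / 2, by omega, by omega⟩
  obtain ⟨w, hw, hwa⟩ : ∃ w : ℤ, w ^ 2 = v ^ 2 ∧ ¬3 ∣ a - w := by
    by_contra! hall
    have := hall v rfl
    have := hall (-v) (neg_sq v)
    omega
  have hweven : 2 ∣ w := by
    rw [← Int.prime_two.dvd_pow_iff_dvd two_ne_zero, hw, Int.prime_two.dvd_pow_iff_dvd two_ne_zero]
    omega
  exact ⟨a + 2 * w, a - w, z, gcd_six_eq_one (by omega) (by omega),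
    gcd_six_eq_one (by omega) hwa, gcd_six_eq_one (by omega) (by omega),
    by linear_combination -6 * hw⟩

lemma exists_three_mul_sum_sq_eq_of_not_three_dvd {a b c : ℤ} (ha : a % 4 = 1)
    (hb : b % 4 = 1) (hc : c % 4 = 1) (hndvd : ¬(3 ∣ a ∧ 3 ∣ b ∧ 3 ∣ c)) :
    ∃ x y z : ℤ, Int.gcd x 6 = 1 ∧ Int.gcd y 6 = 1 ∧ Int.gcd z 6 = 1 ∧
      3 * (a ^ 2 + b ^ 2 + c ^ 2) = x ^ 2 + 2 * y ^ 2 + 6 * z ^ 2 := by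
  obtain ⟨hadd, hsub⟩ | ⟨hadd, hsub⟩ | ⟨hadd, hsub⟩ :
      (¬3 ∣ b + c ∧ ¬(3 ∣ a ∧ 3 ∣ b - c)) ∨ (¬3 ∣ c + a ∧ ¬(3 ∣ b ∧ 3 ∣ c - a)) ∨
        (¬3 ∣ a + b ∧ ¬(3 ∣ c ∧ 3 ∣ a - b)) := by omega
  · exact exists_three_mul_sum_sq_eq_of_not_three_dvd_add ha hb hc hadd hsub
  · rw [add_rotate]
    exact exists_three_mul_sum_sq_eq_of_not_three_dvd_add hb hc ha hadd hsub
  · rw [← add_rotate]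
    exact exists_three_mul_sum_sq_eq_of_not_three_dvd_add hc ha hb hadd hsub

theorem rep_24n_add_nine (n : ℕ) :
    ∃ x y z : ℤ, Int.gcd x 6 = 1 ∧ Int.gcd y 6 = 1 ∧ Int.gcd z 6 = 1 ∧
      24 * (n : ℤ) + 9 = x ^ 2 + 2 * y ^ 2 + 6 * z ^ 2 := by
  obtain ⟨a, b, c, hsum, ha, hb, hc, hndvd⟩ := exists_three_squares_mod_four_eq_one n
  obtain ⟨x, y, z, hx, hy, hz, hxyz⟩ := exists_three_mul_sum_sq_eq_of_not_three_dvd ha hb hc hndvd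
  exact ⟨x, y, z, hx, hy, hz, by linarith⟩
end

section
/- For every nonnegative integer n, there exist odd integers a, b, c with c ≡ 2 (mod 5) or c ≡ −2 (mod 5), such that 120n + 77 = a² + b² + 3c². -/
/-! For `N ≡ 5 (mod 12)` choose a prime `q ≡ 5 (mod 12)` with `q ≡ -3 (mod N)`. By Legendre's
theorem `N w² = 3z² + q t²` is solvable, and `q` is a sum of two squares, so `x² + y² + 3z²`
represents `N` over `ℚ`. The form `x² + (y² + yz + z²)` is Euclidean, so by Davenport–Cassels it
represents `N` over `ℤ`, and each value of `y² + yz + z²` is also a value of `y² + 3z²`. For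
`N ≡ 5 (mod 8)` the variables can then be made odd, through `4s² + 12t² = (s + 3t)² + 3(s - t)²`.

If `a² + b² + 3c² ≡ 2 (mod 5)` and `c ≢ ±2`, then up to signs `a + b ≡ 2c (mod 5)`. Writing
`c = b + 2v` and `a = b + 4v + 10s`, one has `a² + b² + 3c² = 5w² + 5u² + 3v²` with
`w = b + 2v + 2s` odd and `u = v + 4s`. The value of `5u² + 3v²` can be kept while making `u` and
`v` odd, and `5(w² + u²) = (2u - w)² + (u + 2w)²`; since `3v² ≡ 2 (mod 5)`, `v ≡ ±2` takes the place
of `c`. -/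

open QuadraticMap (linMulLin polar polar_comm polar_self polar_smul_left polar_smul_right
  polar_sub_right)

-- Pigeonhole on the box of integer vectors `x` with `0 ≤ x i ≤ √(m i)`.
theorem exists_ne_zero_map_eq_zero_of_card_sq_le {ι G : Type*} [Fintype ι] [Nonempty ι]
    [AddGroup G] [Finite G] (f : (ι → ℤ) →+ G) (m : ι → ℕ) (h : Nat.card G ^ 2 ≤ ∏ i, m i) :
    ∃ x ≠ 0, f x = 0 ∧ ∀ i, x i ^ 2 ≤ m i := by
  classical
  have := Fintype.ofFinite G
  let box := Finset.Icc (0 : ι → ℤ) fun i => (m i).sqrt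
  have hm : ∀ i, 0 < m i := fun i => Nat.pos_of_ne_zero fun hi =>
    (pow_pos Nat.card_pos 2).not_ge (h.trans_eq (Finset.prod_eq_zero (Finset.mem_univ i) hi))
  have hcard : Fintype.card G < box.card := by
    rw [← Nat.card_eq_fintype_card, Pi.card_Icc]
    refine lt_of_pow_lt_pow_left₀ 2 (Nat.zero_le _) (h.trans_lt ?_)
    rw [← Finset.prod_pow]
    refine Finset.prod_lt_prod_of_nonempty (fun i _ => hm i) (fun i _ => ?_) Finset.univ_nonempty
    simpa using Nat.lt_succ_sqrt' (m i)
  obtain ⟨x, hx, y, hy, hne, hxy⟩ :=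
    Finset.exists_ne_map_eq_of_card_lt_of_maps_to (t := Finset.univ) hcard (f := f)
      fun _ _ => Finset.mem_coe.2 (Finset.mem_univ _)
  rw [Finset.mem_Icc] at hx hy
  refine ⟨x - y, sub_ne_zero.2 hne, by rw [map_sub, hxy, sub_self], fun i => ?_⟩
  have hxi : 0 ≤ x i ∧ x i ≤ (m i).sqrt := ⟨hx.1 i, hx.2 i⟩
  have hyi : 0 ≤ y i ∧ y i ≤ (m i).sqrt := ⟨hy.1 i, hy.2 i⟩
  calc (x i - y i) ^ 2 ≤ ((m i).sqrt : ℤ) ^ 2 := sq_le_sq' (by omega) (by omega)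
    _ ≤ m i := by exact_mod_cast Nat.sqrt_le' (m i)

theorem natCast_dvd_mul_sq_add_mul_sq {m : ℕ} {α β x y : ℤ} {r : ZMod m} (hα : IsCoprime α m)
    (hr : (-(α * β) : ZMod m) = r * r) (hxy : (α * x : ZMod m) = r * y) :
    (m : ℤ) ∣ α * x ^ 2 + β * y ^ 2 := by
  rw [← ZMod.intCast_zmod_eq_zero_iff_dvd]
  refine ((ZMod.coe_int_isUnit_iff_isCoprime α m).2 hα.symm).mul_left_cancel ?_
  push_cast
  linear_combination (α * x + r * y : ZMod m) * hxy - (y : ZMod m) ^ 2 * hr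

theorem not_isSquare_mul_of_coprime {b c : ℕ} (hb : Squarefree b) (hb1 : b ≠ 1)
    (hbc : b.Coprime c) : ¬IsSquare (b * c) := by
  rintro ⟨r, hr⟩
  obtain ⟨s, rfl⟩ : b ∣ r := (hb.dvd_pow_iff_dvd two_ne_zero).1 ⟨c, by rw [sq, hr]⟩
  have hc : c = b * (s * s) :=
    mul_left_cancel₀ hb.ne_zero (by rw [hr]; ring)
  exact hb1 (hbc.eq_one_of_dvd ⟨s * s, hc⟩)

section Legendre

variable {a b c : ℕ}

theorem exists_ne_zero_sq_le_of_linear_congruences [NeZero a] [NeZero b] [NeZero c]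
    (r : ZMod a) (s : ZMod b) (u : ZMod c) :
    ∃ w z t : ℤ, ¬(w = 0 ∧ z = 0 ∧ t = 0) ∧ w ^ 2 ≤ b * c ∧ z ^ 2 ≤ a * c ∧ t ^ 2 ≤ a * b ∧
      (b * z : ZMod a) = r * t ∧ (a * w : ZMod b) = s * t ∧ (a * w : ZMod c) = u * z := by
  let f : (Fin 3 → ℤ) →+ ZMod a × ZMod b × ZMod c :=
    AddMonoidHom.mk' (fun x => (b * x 1 - r * x 2, a * x 0 - s * x 2, a * x 0 - u * x 1)) <| by
      intro x y
      simp only [Pi.add_apply, Int.cast_add, Prod.mk_add_mk, Prod.mk.injEq]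
      refine ⟨?_, ?_, ?_⟩ <;> ring
  have hcard : Nat.card (ZMod a × ZMod b × ZMod c) ^ 2 = ∏ i, ![b * c, a * c, a * b] i := by
    simp only [Nat.card_prod, Nat.card_zmod, Fin.prod_univ_three, Matrix.cons_val]
    ring
  obtain ⟨x, hx0, hfx, hx⟩ := exists_ne_zero_map_eq_zero_of_card_sq_le f _ hcard.le
  simp only [f, AddMonoidHom.mk'_apply, Prod.mk_eq_zero, sub_eq_zero] at hfx
  refine ⟨x 0, x 1, x 2, fun h => hx0 ?_, by simpa using hx 0, by simpa using hx 1,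
    by simpa using hx 2, hfx⟩
  ext i
  fin_cases i
  exacts [h.1, h.2.1, h.2.2]

theorem exists_ne_zero_dvd_mul_sq_sub_sub (ha : a ≠ 0) (hb : b ≠ 0) (hc : c ≠ 0)
    (hab : a.Coprime b) (hac : a.Coprime c) (hbc : b.Coprime c)
    (hsa : IsSquare (-(b * c) : ZMod a)) (hsb : IsSquare (a * c : ZMod b))
    (hsc : IsSquare (a * b : ZMod c)) :
    ∃ w z t : ℤ, ¬(w = 0 ∧ z = 0 ∧ t = 0) ∧ w ^ 2 ≤ b * c ∧ z ^ 2 ≤ a * c ∧ t ^ 2 ≤ a * b ∧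
      (a * b * c : ℤ) ∣ a * w ^ 2 - b * z ^ 2 - c * t ^ 2 := by
  have : NeZero a := ⟨ha⟩
  have : NeZero b := ⟨hb⟩
  have : NeZero c := ⟨hc⟩
  obtain ⟨r, hr⟩ := hsa
  obtain ⟨s, hs⟩ := hsb
  obtain ⟨u, hu⟩ := hsc
  obtain ⟨w, z, t, hne, hw, hz, ht, hza, hwb, hwc⟩ :=
    exists_ne_zero_sq_le_of_linear_congruences r s u
  rw [← Nat.isCoprime_iff_coprime] at hab hac hbc
  have hda : (a : ℤ) ∣ b * z ^ 2 + c * t ^ 2 :=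
    natCast_dvd_mul_sq_add_mul_sq hab.symm (by simpa using hr) (by simpa using hza)
  have hdb : (b : ℤ) ∣ a * w ^ 2 + -c * t ^ 2 :=
    natCast_dvd_mul_sq_add_mul_sq hab (by simpa using hs) (by simpa using hwb)
  have hdc : (c : ℤ) ∣ a * w ^ 2 + -b * z ^ 2 :=
    natCast_dvd_mul_sq_add_mul_sq hac (by simpa using hu) (by simpa using hwc)
  refine ⟨w, z, t, hne, hw, hz, ht, (hac.mul_left hbc).mul_dvd (hab.mul_dvd ?_ ?_) ?_⟩
  · convert (Dvd.intro (w ^ 2) rfl).sub hda using 1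
    ring
  · convert hdb.sub (Dvd.intro (z ^ 2) rfl) using 1
    ring
  · convert hdc.sub (Dvd.intro (t ^ 2) rfl) using 1
    ring

theorem legendre_exists_mul_sq_eq (ha : a ≠ 0) (hb : Squarefree b) (hb1 : b ≠ 1) (hc : c ≠ 0)
    (hab : a.Coprime b) (hac : a.Coprime c) (hbc : b.Coprime c)
    (hsa : IsSquare (-(b * c) : ZMod a)) (hsb : IsSquare (a * c : ZMod b))
    (hsc : IsSquare (a * b : ZMod c)) :
    ∃ w z t : ℤ, w ≠ 0 ∧ a * w ^ 2 = b * z ^ 2 + c * t ^ 2 := by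
  obtain ⟨w, z, t, hne, hw, hz, ht, k, hk⟩ :=
    exists_ne_zero_dvd_mul_sq_sub_sub ha hb.ne_zero hc hab hac hbc hsa hsb hsc
  have ha' : (0 : ℤ) < a := by positivity
  have hb' : (0 : ℤ) < b := by exact_mod_cast hb.ne_zero.bot_lt
  have hc' : (0 : ℤ) < c := by positivity
  have hw' : w ^ 2 < b * c := hw.lt_of_ne fun h => not_isSquare_mul_of_coprime hb hb1 hbc <| by
    rw [← Int.isSquare_natCast_iff, Nat.cast_mul, ← h]
    exact IsSquare.sq w
  have ht' : t ^ 2 < a * b := ht.lt_of_ne fun h =>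
    not_isSquare_mul_of_coprime hb hb1 hab.symm <| by
      rw [← Int.isSquare_natCast_iff, Nat.cast_mul, mul_comm, ← h]
      exact IsSquare.sq t
  have hP : (0 : ℤ) < a * b * c := by positivity
  have hlt : (a * b * c : ℤ) * k < a * b * c * 1 := by
    linarith [mul_lt_mul_of_pos_left hw' ha', mul_nonneg hb'.le (sq_nonneg z),
      mul_nonneg hc'.le (sq_nonneg t)]
  have hgt : (a * b * c : ℤ) * (-2) < a * b * c * k := by
    linarith [mul_lt_mul_of_pos_left ht' hc', mul_le_mul_of_nonneg_left hz hb'.le,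
      mul_nonneg ha'.le (sq_nonneg w)]
  have h1 : k < 1 := lt_of_mul_lt_mul_left hlt hP.le
  have h2 : -2 < k := lt_of_mul_lt_mul_left hgt hP.le
  obtain rfl | rfl : k = 0 ∨ k = -1 := by omega
  · refine ⟨w, z, t, ?_, by linarith⟩
    rintro rfl
    have hzt : (b : ℤ) * z ^ 2 + c * t ^ 2 = 0 := by linarith
    rw [add_eq_zero_iff_of_nonneg (by positivity) (by positivity)] at hzt
    exact hne ⟨rfl, eq_zero_of_pow_eq_zero (eq_zero_of_ne_zero_of_mul_left_eq_zero hb'.ne' hzt.1),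
      eq_zero_of_pow_eq_zero (eq_zero_of_ne_zero_of_mul_left_eq_zero hc'.ne' hzt.2)⟩
  · -- `a (w² + bc) = bz² + ct²`, and `(w² + bc)(bz² + ct²) = b(wz - ct)² + c(wt + bz)²`.
    refine ⟨w ^ 2 + b * c, w * z - c * t, w * t + b * z, by positivity, ?_⟩
    linear_combination (w ^ 2 + b * c : ℤ) * hk

end Legendre

theorem jacobiSym_three_of_mod_twelve_eq_five {n : ℕ} (hn : n % 12 = 5) : jacobiSym 3 n = -1 := by
  rw [jacobiSym.mod_right 3 (Nat.odd_iff.2 (by omega))]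
  change jacobiSym 3 (n % 12) = -1
  rw [hn]
  norm_num

theorem jacobiSym_three_mul_eq_one {n q : ℕ} (hn : n % 12 = 5) (hq : q % 12 = 5)
    (hnq : (q : ℤ) ≡ -3 [ZMOD n]) : jacobiSym (n * 3) q = 1 := by
  have hnodd : Odd n := Nat.odd_iff.2 (by omega)
  have hqodd : Odd q := Nat.odd_iff.2 (by omega)
  have hnq' : jacobiSym n q = -1 := by
    rw [jacobiSym.quadratic_reciprocity_one_mod_four (by omega) hqodd, jacobiSym.mod_left' hnq,
      jacobiSym.neg _ hnodd, ZMod.χ₄_nat_one_mod_four (by omega), one_mul,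
      jacobiSym_three_of_mod_twelve_eq_five hn]
  rw [jacobiSym.mul_left, hnq', jacobiSym_three_of_mod_twelve_eq_five hq]
  norm_num

theorem exists_prime_mod_twelve_eq_five_modEq_neg_three {n : ℕ} (hn : n % 12 = 5) :
    ∃ q : ℕ, q.Prime ∧ q % 12 = 5 ∧ (q : ℤ) ≡ -3 [ZMOD n] := by
  obtain ⟨k, hk⟩ : ∃ k : ℤ, (n : ℤ) = 12 * k + 5 := ⟨n / 12, by omega⟩
  have h12 : IsCoprime (4 * n - 3 : ℤ) 12 := ⟨5, -(20 * k + 7), by rw [hk]; ring⟩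
  have hcop : IsCoprime (4 * n - 3 : ℤ) n := ⟨-(4 * k + 2), 16 * k + 7, by rw [hk]; ring⟩
  obtain ⟨q, -, hq, hmod⟩ := Nat.forall_exists_prime_gt_and_zmodEq 0 (q := 12 * n) (by omega)
    (a := 4 * n - 3) (by push_cast; exact h12.mul_right hcop)
  push_cast at hmod
  refine ⟨q, hq, ?_, ?_⟩
  · have := hmod.of_mul_right n
    unfold Int.ModEq at this
    omega
  · exact (hmod.of_mul_left 12).trans (Int.modEq_iff_dvd.2 ⟨-4, by ring⟩)

theorem exists_mul_sq_eq_sq_add_sq_add_three_mul_sq {n : ℕ} (hn : n % 12 = 5) :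
    ∃ w x y z : ℤ, w ≠ 0 ∧ n * w ^ 2 = x ^ 2 + y ^ 2 + 3 * z ^ 2 := by
  obtain ⟨q, hq, hq12, hqn⟩ := exists_prime_mod_twelve_eq_five_modEq_neg_three hn
  have : Fact q.Prime := ⟨hq⟩
  have hn3 : n.Coprime 3 := ((Nat.prime_three.coprime_iff_not_dvd).2 (by omega)).symm
  have hq3 : Nat.Coprime 3 q := (Nat.prime_three.coprime_iff_not_dvd).2 (by omega)
  have hqn' : (q : ZMod n) = -3 := by
    simpa using (ZMod.intCast_eq_intCast_iff (q : ℤ) (-3) n).2 hqn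
  have hnq : n.Coprime q := by
    rw [Nat.coprime_comm, ← ZMod.isUnit_iff_coprime, hqn', IsUnit.neg_iff]
    exact_mod_cast (ZMod.isUnit_iff_coprime 3 n).2 hn3.symm
  have hsn : IsSquare (-((3 : ℕ) * q) : ZMod n) := ⟨3, by rw [hqn']; push_cast; ring⟩
  have hs3 : IsSquare (n * q : ZMod 3) := by
    have hmod (m : ℕ) (hm : m % 12 = 5) : (m : ZMod 3) = 2 := by
      exact (ZMod.natCast_eq_natCast_iff' m 2 3).2 (by omega)
    rw [hmod n hn, hmod q hq12]
    exact IsSquare.mul_self 2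
  have hsq : IsSquare (n * (3 : ℕ) : ZMod q) := by
    simpa using ZMod.isSquare_of_jacobiSym_eq_one (jacobiSym_three_mul_eq_one hn hq12 hqn)
  obtain ⟨w, z, t, hw, h⟩ := legendre_exists_mul_sq_eq (by omega) Nat.prime_three.prime.squarefree
    (by norm_num) hq.ne_zero hn3 hnq hq3 hsn hs3 hsq
  obtain ⟨i, j, hij⟩ := Nat.Prime.sq_add_sq (p := q) (by omega)
  refine ⟨w, i * t, j * t, z, hw, ?_⟩
  rw [h, ← hij]
  push_cast
  ring

/-- Clark's notion of a Euclidean quadratic form, with the rational points `x / w` of the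
lattice `M` cleared of denominators: every such point that is not in `M` lies at `Q`-distance
strictly between `0` and `1` from some point of `M`. -/
def IsEuclideanForm {M : Type*} [AddCommGroup M] (Q : QuadraticForm ℤ M) : Prop :=
  ∀ (x : M) (w : ℕ), 0 < w → (¬∃ y : M, x = (w : ℤ) • y) →
    ∃ y : M, Q (x - (w : ℤ) • y) ≠ 0 ∧ |Q (x - (w : ℤ) • y)| < (w : ℤ) ^ 2

section DavenportCassels

variable {M : Type*} [AddCommGroup M] {Q : QuadraticForm ℤ M}

theorem quadraticForm_map_smul_add_smul (x y : M) (r s : ℤ) :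
    Q (r • x + s • y) = r ^ 2 * Q x + r * s * polar Q x y + s ^ 2 * Q y := by
  rw [QuadraticMap.map_add Q, QuadraticMap.map_smul, QuadraticMap.map_smul, polar_smul_left,
    polar_smul_right]
  simp only [smul_eq_mul]
  ring

-- The line through the points `x / w` and `y` meets the quadric `Q = n` again at `x' / w'`.
theorem exists_mul_eq_and_mul_sq_eq {n w : ℤ} {x : M} (h : n * w ^ 2 = Q x) (y : M) :
    ∃ (w' : ℤ) (x' : M), w * w' = Q (x - w • y) ∧ n * w' ^ 2 = Q x' := by
  have hxy : Q (x - w • y) = Q x - w * polar Q x y + w ^ 2 * Q y := by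
    simpa [sub_eq_add_neg] using quadraticForm_map_smul_add_smul (Q := Q) x y 1 (-w)
  set w' := n * w - polar Q x y + w * Q y with hw'
  have hmul : w * w' = Q (x - w • y) := by rw [hxy, ← h]; ring
  have hpolar : polar Q y (x - w • y) = -w' - w * (Q y - n) := by
    rw [polar_sub_right, polar_smul_right, polar_self, polar_comm, hw']
    simp only [smul_eq_mul, nsmul_eq_mul]
    ring
  refine ⟨w', w' • y + (Q y - n) • (x - w • y), hmul, ?_⟩
  rw [quadraticForm_map_smul_add_smul, hpolar, ← hmul]
  ring

/-- The **Davenport–Cassels theorem**. -/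
theorem IsEuclideanForm.exists_eq_of_mul_sq_eq (hQ : IsEuclideanForm Q) {n : ℤ} {w : ℕ}
    (hw : 0 < w) {x : M} (h : n * (w : ℤ) ^ 2 = Q x) : ∃ y : M, Q y = n := by
  induction w using Nat.strong_induction_on generalizing x with
  | _ w ih =>
    have hw2 : (0 : ℤ) < w := by exact_mod_cast hw
    by_cases hx : ∃ y : M, x = (w : ℤ) • y
    · obtain ⟨y, rfl⟩ := hx
      rw [QuadraticMap.map_smul, smul_eq_mul, ← sq, mul_comm] at h
      exact ⟨y, (mul_left_cancel₀ (pow_ne_zero 2 hw2.ne') h).symm⟩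
    obtain ⟨y, hne, hlt⟩ := hQ x w hw hx
    obtain ⟨w', x', hmul, hx'⟩ := exists_mul_eq_and_mul_sq_eq h y
    rw [← hmul] at hne hlt
    refine ih w'.natAbs ?_ (Int.natAbs_pos.2 (right_ne_zero_of_mul hne)) (x := x') ?_
    · rw [abs_mul, Nat.abs_cast, sq] at hlt
      have hlt' := lt_of_mul_lt_mul_left hlt hw2.le
      rw [Int.abs_eq_natAbs] at hlt'
      exact_mod_cast hlt'
    · rw [Int.natAbs_sq, hx']

end DavenportCassels

/-- The ternary form `x² + (y² + yz + z²)`. Unlike `x² + y² + 3z²`, which it represents on a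
sublattice of index `2`, it is Euclidean. -/
def squareHexForm : QuadraticForm ℤ (ℤ × ℤ × ℤ) :=
  QuadraticMap.sq.prod
    (linMulLin (.fst ℤ ℤ ℤ) (.fst ℤ ℤ ℤ + .snd ℤ ℤ ℤ) + QuadraticMap.sq.comp (.snd ℤ ℤ ℤ))

theorem squareHexForm_apply (x y z : ℤ) :
    squareHexForm (x, y, z) = x ^ 2 + (y ^ 2 + y * z + z ^ 2) := by
  simp only [squareHexForm, QuadraticMap.prod_apply, QuadraticMap.sq_apply, add_apply,
    QuadraticMap.linMulLin_apply, QuadraticMap.comp_apply, LinearMap.fst_apply,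
    LinearMap.snd_apply, LinearMap.add_apply]
  ring

theorem four_mul_squareHexForm (x y z : ℤ) :
    4 * squareHexForm (x, y, z) = (2 * x) ^ 2 + (2 * y + z) ^ 2 + 3 * z ^ 2 := by
  rw [squareHexForm_apply]
  ring

theorem exists_abs_two_mul_sub_mul_le (x : ℤ) {w : ℤ} (hw : 0 < w) :
    ∃ y : ℤ, |2 * (x - w * y)| ≤ w := by
  refine ⟨(2 * x + w) / (2 * w), abs_le.2 ?_⟩
  have h := Int.emod_add_mul_ediv (2 * x + w) (2 * w)
  have h₀ := Int.emod_nonneg (2 * x + w) (show 2 * w ≠ 0 by omega)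
  have h₁ := Int.emod_lt_of_pos (2 * x + w) (show 0 < 2 * w by omega)
  constructor <;> linarith

theorem squareHexForm_pos {v : ℤ × ℤ × ℤ} (hv : v ≠ 0) : 0 < squareHexForm v := by
  obtain ⟨x, y, z⟩ := v
  have h4 := four_mul_squareHexForm x y z
  by_contra! h
  have hz : z ^ 2 = 0 := by linarith [sq_nonneg (2 * x), sq_nonneg (2 * y + z), sq_nonneg z]
  have hx : (2 * x) ^ 2 = 0 := by linarith [sq_nonneg (2 * x), sq_nonneg (2 * y + z)]
  have hy : (2 * y + z) ^ 2 = 0 := by linarith [sq_nonneg (2 * x), sq_nonneg (2 * y + z)]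
  rw [sq_eq_zero_iff] at hx hy hz
  exact hv (by simp only [Prod.mk_eq_zero]; omega)

-- Round `x` and `z`, then `y` so that `2y + z` is within `1`: the value left over is at most
-- `1/4 + 1/4 + 3/16 < 1`.
theorem isEuclideanForm_squareHexForm : IsEuclideanForm squareHexForm := by
  rintro ⟨x, y, z⟩ w hw hxw
  have hw2 : (0 : ℤ) < w := by exact_mod_cast hw
  obtain ⟨x₀, hx⟩ := exists_abs_two_mul_sub_mul_le x hw2
  obtain ⟨z₀, hz⟩ := exists_abs_two_mul_sub_mul_le z hw2
  obtain ⟨y₀, hy⟩ := exists_abs_two_mul_sub_mul_le (2 * y + (z - w * z₀)) (w := 2 * w) (by omega)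
  have hpos := squareHexForm_pos (sub_ne_zero.2 fun h => hxw ⟨(x₀, y₀, z₀), h⟩)
  refine ⟨(x₀, y₀, z₀), hpos.ne', (abs_of_pos hpos).trans_lt ?_⟩
  have h4 := four_mul_squareHexForm (x - w * x₀) (y - w * y₀) (z - w * z₀)
  have hx2 := sq_le_sq' (abs_le.1 hx).1 (abs_le.1 hx).2
  have hy2 := sq_le_sq' (abs_le.1 hy).1 (abs_le.1 hy).2
  have hz2 := sq_le_sq' (abs_le.1 hz).1 (abs_le.1 hz).2
  change squareHexForm (x - w * x₀, y - w * y₀, z - w * z₀) < (w : ℤ) ^ 2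
  have hw3 : (0 : ℤ) < w ^ 2 := by positivity
  linarith

theorem exists_sq_add_mul_add_sq_eq (y z : ℤ) :
    ∃ p r : ℤ, y ^ 2 + y * z + z ^ 2 = p ^ 2 + 3 * r ^ 2 := by
  rcases Int.even_or_odd' z with ⟨t, rfl | rfl⟩
  · exact ⟨y + t, t, by ring⟩
  rcases Int.even_or_odd' y with ⟨s, rfl | rfl⟩
  · exact ⟨2 * t + 1 + s, s, by ring⟩
  · exact ⟨s - t, s + t + 1, by ring⟩

theorem exists_eq_sq_add_sq_add_three_mul_sq_of_mul_sq_eq {n w x y z : ℤ} (hw : w ≠ 0)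
    (h : n * w ^ 2 = x ^ 2 + y ^ 2 + 3 * z ^ 2) :
    ∃ a b c : ℤ, n = a ^ 2 + b ^ 2 + 3 * c ^ 2 := by
  have hQ : n * (w.natAbs : ℤ) ^ 2 = squareHexForm (x, y - z, 2 * z) := by
    rw [Int.natAbs_sq, h, squareHexForm_apply]
    ring
  obtain ⟨⟨a, s, t⟩, rfl⟩ :=
    isEuclideanForm_squareHexForm.exists_eq_of_mul_sq_eq (Int.natAbs_pos.2 hw) hQ
  obtain ⟨b, c, hbc⟩ := exists_sq_add_mul_add_sq_eq s t
  exact ⟨a, b, c, by rw [squareHexForm_apply, hbc]; ring⟩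

theorem emod_two_and_sq_emod_eight (x : ℤ) :
    x % 2 = 0 ∧ (x ^ 2 % 8 = 0 ∨ x ^ 2 % 8 = 4) ∨ x % 2 = 1 ∧ x ^ 2 % 8 = 1 := by
  rcases Int.even_or_odd x with hx | hx
  · have := Int.even_iff.1 hx
    obtain ⟨k, rfl⟩ := hx.two_dvd
    have := mul_pow 2 k 2
    omega
  · have := Int.odd_iff.1 hx
    have := Int.eight_dvd_sq_sub_one_of_odd hx
    omega

theorem exists_odd_of_odd_of_even_of_even {x y z : ℤ} (hx : Odd x) (hy : Even y) (hz : Even z)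
    (h : (x ^ 2 + y ^ 2 + 3 * z ^ 2) % 8 = 5) :
    ∃ a b c : ℤ, Odd a ∧ Odd b ∧ Odd c ∧ x ^ 2 + y ^ 2 + 3 * z ^ 2 = a ^ 2 + b ^ 2 + 3 * c ^ 2 := by
  obtain ⟨s, rfl⟩ := hy.two_dvd
  obtain ⟨t, rfl⟩ := hz.two_dvd
  have hst : Odd (s ^ 2 + 3 * t ^ 2) := by
    rw [Int.odd_iff] at hx ⊢
    have := emod_two_and_sq_emod_eight x
    simp only [mul_pow] at h
    omega
  have hadd : Odd (s + t) := by
    rw [Int.odd_add] at hst ⊢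
    simpa only [Int.odd_pow' two_ne_zero, Int.even_mul, Int.even_pow' two_ne_zero,
      show ¬Even (3 : ℤ) by decide, false_or] using hst
  refine ⟨x, s + 3 * t, s - t, hx, ?_, ?_, by ring⟩ <;>
  · rw [Int.odd_iff] at hadd ⊢
    omega

theorem exists_odd_of_emod_eight_eq_five {x y z : ℤ}
    (h : (x ^ 2 + y ^ 2 + 3 * z ^ 2) % 8 = 5) :
    ∃ a b c : ℤ, Odd a ∧ Odd b ∧ Odd c ∧ x ^ 2 + y ^ 2 + 3 * z ^ 2 = a ^ 2 + b ^ 2 + 3 * c ^ 2 := by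
  have hparity : Odd x ∧ Odd y ∧ Odd z ∨ Odd x ∧ Even y ∧ Even z ∨ Odd y ∧ Even x ∧ Even z := by
    simp only [Int.odd_iff, Int.even_iff]
    have := emod_two_and_sq_emod_eight x
    have := emod_two_and_sq_emod_eight y
    have := emod_two_and_sq_emod_eight z
    omega
  rcases hparity with ⟨hx, hy, hz⟩ | ⟨hx, hy, hz⟩ | ⟨hy, hx, hz⟩
  · exact ⟨x, y, z, hx, hy, hz, rfl⟩
  · exact exists_odd_of_odd_of_even_of_even hx hy hz h
  · rw [add_comm (x ^ 2)] at h ⊢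
    exact exists_odd_of_odd_of_even_of_even hy hx hz h

-- As `5 (5u² + 3v²)` is the norm of `5u + v√-15`, multiplication by `(1 ± √-15) / 2`, of norm `4`,
-- multiplies the form by `4`; one choice of sign keeps odd pairs odd.
theorem exists_odd_eq_four_mul_of_odd {e f : ℤ} (he : Odd e) (hf : Odd f) :
    ∃ u v : ℤ, Odd u ∧ Odd v ∧ 5 * u ^ 2 + 3 * v ^ 2 = 4 * (5 * e ^ 2 + 3 * f ^ 2) := by
  obtain ⟨i, rfl⟩ := he
  obtain ⟨j, rfl⟩ := hf
  simp only [Int.odd_iff]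
  rcases Int.emod_two_eq_zero_or_one (i + j) with hij | hij
  · exact ⟨i - 3 * j - 1, 5 * i + j + 3, by omega, by omega, by ring⟩
  · exact ⟨i + 3 * j + 2, 5 * i - j + 2, by omega, by omega, by ring⟩

theorem exists_odd_eq_four_mul {e f : ℤ} (hef : Even (e + f)) (hne : ¬(e = 0 ∧ f = 0)) :
    ∃ u v : ℤ, Odd u ∧ Odd v ∧ 5 * u ^ 2 + 3 * v ^ 2 = 4 * (5 * e ^ 2 + 3 * f ^ 2) := by
  rcases Int.even_or_odd e with he | he
  · obtain ⟨g, rfl⟩ := he.two_dvd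
    obtain ⟨h, rfl⟩ := ((Int.even_add.1 hef).1 he).two_dvd
    rcases Int.even_or_odd (g + h) with hgh | hgh
    · obtain ⟨u, v, hu, hv, huv⟩ := exists_odd_eq_four_mul hgh (by omega)
      obtain ⟨u', v', hu', hv', huv'⟩ := exists_odd_eq_four_mul_of_odd hu hv
      exact ⟨u', v', hu', hv', by linear_combination huv' + 4 * huv⟩
    · rw [Int.odd_iff] at hgh
      exact ⟨g - 3 * h, 5 * g + h, Int.odd_iff.2 (by omega), Int.odd_iff.2 (by omega), by ring⟩
  · exact exists_odd_eq_four_mul_of_odd he (by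
      rw [← Int.not_even_iff_odd] at he ⊢; exact fun h => he ((Int.even_add.1 hef).2 h))
termination_by e.natAbs + f.natAbs
decreasing_by omega

theorem exists_odd_five_mul_sq_add_three_mul_sq_eq {u v : ℤ} (huv : 4 ∣ u - v)
    (hne : ¬(u = 0 ∧ v = 0)) :
    ∃ u' v' : ℤ, Odd u' ∧ Odd v' ∧ 5 * u' ^ 2 + 3 * v' ^ 2 = 5 * u ^ 2 + 3 * v ^ 2 := by
  obtain ⟨s, hs⟩ := huv
  obtain rfl : u = v + 4 * s := by linarith
  rcases Int.even_or_odd' v with ⟨f, rfl | rfl⟩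
  · obtain ⟨u', v', hu', hv', h⟩ :=
      exists_odd_eq_four_mul (e := f + 2 * s) (f := f) ⟨f + s, by ring⟩ (by omega)
    exact ⟨u', v', hu', hv', by rw [h]; ring⟩
  · exact ⟨_, _, ⟨f + 2 * s, by ring⟩, ⟨f, rfl⟩, rfl⟩

theorem modEq_five_iff_intCast_eq (x y : ℤ) : x ≡ y [ZMOD 5] ↔ (x : ZMod 5) = y :=
  (ZMod.intCast_eq_intCast_iff x y 5).symm

theorem modEq_two_or_add_modEq_two_mul_of_modEq_two {a b c : ℤ}
    (h : a ^ 2 + b ^ 2 + 3 * c ^ 2 ≡ 2 [ZMOD 5]) :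
    (c ≡ 2 [ZMOD 5] ∨ c ≡ -2 [ZMOD 5]) ∨ a + b ≡ 2 * c [ZMOD 5] ∨ a + b ≡ 2 * -c [ZMOD 5] ∨
      a + -b ≡ 2 * c [ZMOD 5] ∨ a + -b ≡ 2 * -c [ZMOD 5] := by
  have key : ∀ a b c : ZMod 5, a ^ 2 + b ^ 2 + 3 * c ^ 2 = 2 → (c = 2 ∨ c = -2) ∨ a + b = 2 * c ∨
      a + b = 2 * -c ∨ a + -b = 2 * c ∨ a + -b = 2 * -c := by decide
  simp only [modEq_five_iff_intCast_eq] at h ⊢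
  push_cast at h ⊢
  exact key a b c h

theorem modEq_two_or_modEq_neg_two_of_modEq_two {u v w : ℤ}
    (h : 5 * w ^ 2 + (5 * u ^ 2 + 3 * v ^ 2) ≡ 2 [ZMOD 5]) :
    v ≡ 2 [ZMOD 5] ∨ v ≡ -2 [ZMOD 5] := by
  have key : ∀ u v w : ZMod 5, 5 * w ^ 2 + (5 * u ^ 2 + 3 * v ^ 2) = 2 → v = 2 ∨ v = -2 := by
    decide
  simp only [modEq_five_iff_intCast_eq] at h ⊢
  push_cast at h ⊢
  exact key u v w h

theorem exists_odd_modEq_of_add_modEq {a b c : ℤ} (ha : Odd a) (hb : Odd b) (hc : Odd c)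
    (habc : a + b ≡ 2 * c [ZMOD 5]) (h : a ^ 2 + b ^ 2 + 3 * c ^ 2 ≡ 2 [ZMOD 5]) :
    ∃ a' b' c' : ℤ, Odd a' ∧ Odd b' ∧ Odd c' ∧ (c' ≡ 2 [ZMOD 5] ∨ c' ≡ -2 [ZMOD 5]) ∧
      a ^ 2 + b ^ 2 + 3 * c ^ 2 = a' ^ 2 + b' ^ 2 + 3 * c' ^ 2 := by
  obtain ⟨v, hv⟩ := (hc.sub_odd hb).two_dvd
  obtain ⟨s, hs⟩ : (10 : ℤ) ∣ a + b - 2 * c := by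
    have := habc.dvd
    rw [Int.odd_iff] at ha hb
    omega
  obtain rfl : c = b + 2 * v := by linarith
  obtain rfl : a = b + 4 * v + 10 * s := by linarith
  set w := b + 2 * v + 2 * s with hw
  have hwodd : Odd w := by rw [Int.odd_iff] at hb ⊢; omega
  have hsum : (b + 4 * v + 10 * s) ^ 2 + b ^ 2 + 3 * (b + 2 * v) ^ 2 =
      5 * w ^ 2 + (5 * (v + 4 * s) ^ 2 + 3 * v ^ 2) := by rw [hw]; ring
  have hne : ¬(v + 4 * s = 0 ∧ v = 0) := by
    rintro ⟨hu, hv⟩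
    rw [hsum, hu, hv] at h
    have := h.dvd
    omega
  obtain ⟨u, c, hu, hc, huc⟩ := exists_odd_five_mul_sq_add_three_mul_sq_eq ⟨s, by ring⟩ hne
  rw [hsum, ← huc] at h ⊢
  exact ⟨2 * u - w, u + 2 * w, c, (even_two_mul u).sub_odd hwodd, hu.add_even (even_two_mul w), hc,
    modEq_two_or_modEq_neg_two_of_modEq_two h, by ring⟩

theorem exists_odd_modEq_of_modEq_two {a b c : ℤ} (ha : Odd a) (hb : Odd b) (hc : Odd c)
    (h : a ^ 2 + b ^ 2 + 3 * c ^ 2 ≡ 2 [ZMOD 5]) :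
    ∃ a' b' c' : ℤ, Odd a' ∧ Odd b' ∧ Odd c' ∧ (c' ≡ 2 [ZMOD 5] ∨ c' ≡ -2 [ZMOD 5]) ∧
      a ^ 2 + b ^ 2 + 3 * c ^ 2 = a' ^ 2 + b' ^ 2 + 3 * c' ^ 2 := by
  rcases modEq_two_or_add_modEq_two_mul_of_modEq_two h with hc2 | habc | habc | habc | habc
  · exact ⟨a, b, c, ha, hb, hc, hc2, rfl⟩
  · exact exists_odd_modEq_of_add_modEq ha hb hc habc h
  · simpa only [neg_sq] using exists_odd_modEq_of_add_modEq ha hb hc.neg habc (by rwa [neg_sq])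
  · simpa only [neg_sq] using exists_odd_modEq_of_add_modEq ha hb.neg hc habc (by rwa [neg_sq])
  · simpa only [neg_sq] using
      exists_odd_modEq_of_add_modEq ha hb.neg hc.neg habc (by rwa [neg_sq, neg_sq])

theorem rep_120n_add_77_odd (n : ℕ) :
    ∃ a b c : ℤ, Odd a ∧ Odd b ∧ Odd c ∧ (c ≡ 2 [ZMOD 5] ∨ c ≡ -2 [ZMOD 5]) ∧
      120 * (n : ℤ) + 77 = a ^ 2 + b ^ 2 + 3 * c ^ 2 := by
  obtain ⟨w, x, y, z, hw, hrat⟩ :=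
    exists_mul_sq_eq_sq_add_sq_add_three_mul_sq (n := 120 * n + 77) (by omega)
  push_cast at hrat
  obtain ⟨x, y, z, hint⟩ := exists_eq_sq_add_sq_add_three_mul_sq_of_mul_sq_eq hw hrat
  obtain ⟨a, b, c, ha, hb, hc, hodd⟩ :=
    exists_odd_of_emod_eight_eq_five (x := x) (y := y) (z := z) (by omega)
  rw [hint, hodd]
  refine exists_odd_modEq_of_modEq_two ha hb hc ?_
  rw [← hodd, ← hint]
  exact Int.modEq_iff_dvd.2 ⟨-(24 * n + 15), by ring⟩
end
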